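/- arXiv:quant-ph/0302079 — 4 statements merged into one kernel-verified Lean document; each statement's English description precedes it below -/
import Mathlib

section
/- Let ε > 0. If there exists a unit vector ξ ∈ ℂ^{2^m} on which the acceptance probability of the circuit is more than 1 − ε, then the 3-local Hamiltonian H = H_in + H_out + H_prop + H_clock has an eigenvalue smaller than ε/(T+1). -/
/-!
The history state `v = ∑_{t=0}^{T} (U_t ⋯ U_1 ψ) ⊗ |t̂⟩`, with `ψ = ξ ⊗ |0⋯0⟩`, has squared norm
`T + 1` and energy `⟨v, H v⟩ = 1 - accProb < ε`. If every eigenvalue of the Hermitian matrix `H`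
were at least `ε / (T + 1)`, then `H - ε / (T + 1)` would be positive semidefinite and the energy
of `v` would be at least `ε`; hence some eigenvalue lies below `ε / (T + 1)`
(`exists_eigenvalue_lt`).

For the energy, `⟨v, (A ⊗ C) v⟩ = ∑_{t,t'} ⟨t̂|C|t̂'⟩ ⟨e_t, A e_{t'}⟩` where `e_t = U_t ⋯ U_1 ψ`.
Between legal clock states, each clock operator in `H_in`, `H_out` and `H_prop` has exactly one
nonzero entry, equal to `1` (`IsLegalUnit`), so each term of `H` contributes a single inner product
(`IsLegalUnit.quadForm_kronecker`); in particular the illegal states reached by `|1⟩⟨0|_t` play no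
role. The clock penalty `S` vanishes on legal states.
-/

open Matrix
open scoped Kronecker

/-- The computation space `ℂ^{2^N} = (ℂ²)^{⊗N}`: basis states are assignments
`Fin N → Fin 2` of the `N` computation qubits. -/
abbrev CompBasis (N : ℕ) := Fin N → Fin 2

/-- The clock space `(ℂ²)^{⊗T}`: basis states are assignments `Fin T → Fin 2` of the
`T` clock qubits (qubit `t ∈ {1, …, T}` of the paper is index `t − 1` here). -/
abbrev ClockBasis (T : ℕ) := Fin T → Fin 2

/-- Projector `|a⟩⟨a|_i` onto the `i`-th computation qubit having value `a`. -/
noncomputable def qproj (N : ℕ) (i : Fin N) (a : Fin 2) :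
    Matrix (CompBasis N) (CompBasis N) ℂ :=
  Matrix.diagonal fun f => if f i = a then 1 else 0

/-- Projector `|a⟩⟨a|_i` onto the `i`-th clock qubit having value `a`. -/
noncomputable def cproj (T : ℕ) (i : Fin T) (a : Fin 2) :
    Matrix (ClockBasis T) (ClockBasis T) ℂ :=
  Matrix.diagonal fun g => if g i = a then 1 else 0

/-- Two-qubit projector `|a b⟩⟨a b|_{i j}` on clock qubits `i`, `j`. -/
noncomputable def cproj2 (T : ℕ) (i j : Fin T) (a b : Fin 2) :
    Matrix (ClockBasis T) (ClockBasis T) ℂ :=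
  Matrix.diagonal fun g => if g i = a ∧ g j = b then 1 else 0

/-- The operator `|1⟩⟨0|_i` on clock qubit `i` (identity on the other clock qubits). -/
noncomputable def cflip (T : ℕ) (i : Fin T) :
    Matrix (ClockBasis T) (ClockBasis T) ℂ :=
  fun g g' => if g i = 1 ∧ g' i = 0 ∧ ∀ s, s ≠ i → g s = g' s then 1 else 0

/-- First projector term of `H_prop,t` (with `s : Fin T` standing for the paper's
`t = s + 1`): `|10⟩⟨10|_{t,t+1}` for `t ≤ T − 1`, and `|1⟩⟨1|_T` for `t = T`. -/
noncomputable def Aterm (T : ℕ) (s : Fin T) : Matrix (ClockBasis T) (ClockBasis T) ℂ :=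
  if h : (s : ℕ) + 1 < T then cproj2 T s ⟨(s : ℕ) + 1, h⟩ 1 0 else cproj T s 1

/-- Second projector term of `H_prop,t` (with `s : Fin T` standing for the paper's
`t = s + 1`): `|10⟩⟨10|_{t−1,t}` for `t ≥ 2`, and `|0⟩⟨0|_1` for `t = 1`. -/
noncomputable def Bterm (T : ℕ) (s : Fin T) : Matrix (ClockBasis T) (ClockBasis T) ℂ :=
  if 0 < (s : ℕ) then
    cproj2 T ⟨(s : ℕ) - 1, Nat.lt_of_le_of_lt (Nat.sub_le _ _) s.isLt⟩ s 1 0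
  else cproj T s 0

/-- The 3-local propagation term `H_prop,t` on `ℂ^{2^N} ⊗ (ℂ²)^{⊗T}`, where `s : Fin T`
stands for the paper's `t = s + 1 ∈ {1, …, T}`:
`H_prop,t = ½ ( I ⊗ A_t + I ⊗ B_t − U_t ⊗ |1⟩⟨0|_t − U_t† ⊗ |0⟩⟨1|_t )`. -/
noncomputable def Hprop3 (N T : ℕ) (U : Fin T → Matrix (CompBasis N) (CompBasis N) ℂ)
    (s : Fin T) : Matrix (CompBasis N × ClockBasis T) (CompBasis N × ClockBasis T) ℂ :=
  (1 / 2 : ℂ) •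
    ((1 : Matrix (CompBasis N) (CompBasis N) ℂ) ⊗ₖ Aterm T s
      + (1 : Matrix (CompBasis N) (CompBasis N) ℂ) ⊗ₖ Bterm T s
      - U s ⊗ₖ cflip T s
      - (U s)ᴴ ⊗ₖ (cflip T s)ᴴ)

/-- `H_in = Σ_{i=m+1}^N |1⟩⟨1|_i ⊗ |0⟩⟨0|_1` on `ℂ^{2^N} ⊗ (ℂ²)^{⊗T}`. -/
noncomputable def Hin3 (N m T : ℕ) (hT : 0 < T) :
    Matrix (CompBasis N × ClockBasis T) (CompBasis N × ClockBasis T) ℂ :=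
  ∑ i ∈ Finset.univ.filter (fun i : Fin N => m ≤ (i : ℕ)),
    qproj N i 1 ⊗ₖ cproj T ⟨0, hT⟩ 0

/-- `H_out = |0⟩⟨0|_1 ⊗ |1⟩⟨1|_T` on `ℂ^{2^N} ⊗ (ℂ²)^{⊗T}`. -/
noncomputable def Hout3 (N T : ℕ) (hN : 0 < N) (hT : 0 < T) :
    Matrix (CompBasis N × ClockBasis T) (CompBasis N × ClockBasis T) ℂ :=
  qproj N ⟨0, hN⟩ 0 ⊗ₖ cproj T ⟨T - 1, Nat.sub_lt hT one_pos⟩ 1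

/-- `S = Σ_{1 ≤ i < j ≤ T} |01⟩⟨01|_{ij}` on the clock space. -/
noncomputable def Sclock (T : ℕ) : Matrix (ClockBasis T) (ClockBasis T) ℂ :=
  ∑ i : Fin T, ∑ j : Fin T, if i < j then cproj2 T i j 0 1 else 0

/-- `H_clock = T^12 Σ_{1 ≤ i < j ≤ T} |01⟩⟨01|_{ij}` on `ℂ^{2^N} ⊗ (ℂ²)^{⊗T}`. -/
noncomputable def Hclock3 (N T : ℕ) :
    Matrix (CompBasis N × ClockBasis T) (CompBasis N × ClockBasis T) ℂ :=
  ((T : ℂ) ^ 12) • ((1 : Matrix (CompBasis N) (CompBasis N) ℂ) ⊗ₖ Sclock T)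

/-- `H_comp = H_in + H_out + H_prop`. -/
noncomputable def Hcomp3 (N m T : ℕ) (hN : 0 < N) (hT : 0 < T)
    (U : Fin T → Matrix (CompBasis N) (CompBasis N) ℂ) :
    Matrix (CompBasis N × ClockBasis T) (CompBasis N × ClockBasis T) ℂ :=
  Hin3 N m T hT + Hout3 N T hN hT + ∑ s : Fin T, Hprop3 N T U s

/-- The legal unary clock basis state `|t̂⟩ = 1^t 0^{T−t}`. -/
def unaryClock (T t : ℕ) : ClockBasis T := fun i => if (i : ℕ) < t then 1 else 0

/-- `evolve T U ψ t = U_t ⋯ U_1 ψ` (with `U_s` for `s > T` taken to be the identity). -/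
noncomputable def evolve {n : Type*} [Fintype n] [DecidableEq n] (T : ℕ)
    (U : Fin T → Matrix n n ℂ) (ψ : n → ℂ) : ℕ → (n → ℂ)
  | 0 => ψ
  | (t + 1) => (if h : t < T then U ⟨t, h⟩ else 1) *ᵥ evolve T U ψ t

/-- The input state `ξ ⊗ |0⋯0⟩ ∈ ℂ^{2^N}`: the proof `ξ` on the first `m` qubits and the
all-zeros state on the remaining `N − m` ancilla qubits. -/
noncomputable def inputVec (N m : ℕ) (hm : m ≤ N) (ξ : (Fin m → Fin 2) → ℂ) :
    CompBasis N → ℂ :=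
  fun f => if ∀ i : Fin N, m ≤ (i : ℕ) → f i = 0 then ξ (fun j => f (Fin.castLE hm j)) else 0

/-- The acceptance probability `‖ |1⟩⟨1|_1 · U_T ⋯ U_1 (ξ ⊗ |0⋯0⟩) ‖²` of the circuit on `ξ`. -/
noncomputable def accProb (N m T : ℕ) (hN : 0 < N) (hm : m ≤ N)
    (U : Fin T → Matrix (CompBasis N) (CompBasis N) ℂ) (ξ : (Fin m → Fin 2) → ℂ) : ℝ :=
  ∑ f : CompBasis N,
    Complex.normSq ((qproj N ⟨0, hN⟩ 1 *ᵥ evolve T U (inputVec N m hm ξ) T) f)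

/-! ### Low eigenvalues from low energy -/

open scoped ComplexOrder in
/-- Variational principle: a Hermitian matrix with a test vector of energy below `c ‖v‖²` has an
eigenvalue below `c`. -/
lemma exists_eigenvalue_lt {n : Type*} [Fintype n] [DecidableEq n] {H : Matrix n n ℂ}
    (hH : H.IsHermitian) (c : ℝ) (v : n → ℂ)
    (hv : (star v ⬝ᵥ H *ᵥ v).re < c * (star v ⬝ᵥ v).re) :
    ∃ μ : ℝ, μ < c ∧ ∃ w : n → ℂ, w ≠ 0 ∧ H *ᵥ w = (μ : ℂ) • w := by
  have hK : (H - (c : ℂ) • (1 : Matrix n n ℂ)).IsHermitian := by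
    refine hH.sub ?_
    ext i j
    by_cases h : i = j <;> simp [Matrix.conjTranspose_apply, h, eq_comm]
  by_contra! hcon
  have hpsd : (H - (c : ℂ) • (1 : Matrix n n ℂ)).PosSemidef := by
    rw [hK.posSemidef_iff_eigenvalues_nonneg]
    intro i
    by_contra! hi
    simp only [Pi.zero_apply] at hi
    refine hcon (hK.eigenvalues i + c) (by linarith) (hK.eigenvectorBasis i).ofLp ?_ ?_
    · intro h0
      have := hK.eigenvectorBasis.orthonormal.ne_zero i
      apply this
      ext j
      exact congrFun h0 j
    · have h := hK.mulVec_eigenvectorBasis i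
      rw [Matrix.sub_mulVec, Matrix.smul_mulVec, Matrix.one_mulVec, sub_eq_iff_eq_add] at h
      rw [h]
      push_cast
      rw [add_smul]
      rfl
  have h := hpsd.dotProduct_mulVec_nonneg v
  rw [Matrix.sub_mulVec, Matrix.smul_mulVec, Matrix.one_mulVec, dotProduct_sub,
    dotProduct_smul] at h
  have h' := (Complex.le_def.mp h).1
  simp at h'
  linarith

/-! ### The history state -/

/-- The product vector `x ⊗ |g⟩` for a clock basis state `g`. -/
def tensorClock {n c : Type*} [DecidableEq c] (x : n → ℂ) (g : c) : n × c → ℂ :=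
  fun p => if p.2 = g then x p.1 else 0

lemma quadForm_tensorClock {n c : Type*} [Fintype n] [Fintype c] [DecidableEq c]
    (A : Matrix n n ℂ) (C : Matrix c c ℂ) (x y : n → ℂ) (g h : c) :
    star (tensorClock x g) ⬝ᵥ (A ⊗ₖ C) *ᵥ tensorClock y h = C g h * (star x ⬝ᵥ A *ᵥ y) := by
  simp only [dotProduct, mulVec, tensorClock, Fintype.sum_prod_type, Pi.star_apply,
    kroneckerMap_apply, apply_ite star, star_zero, ite_mul, zero_mul, mul_ite, mul_zero,
    Finset.sum_ite_eq', Finset.mem_univ, if_true, Finset.mul_sum]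
  refine Finset.sum_congr rfl fun i _ => ?_
  rw [Finset.sum_comm]
  refine Finset.sum_congr rfl fun j _ => ?_
  rw [Finset.sum_ite_eq' Finset.univ g, if_pos (Finset.mem_univ g)]
  ring

/-- The unnormalised history state `∑_{t=0}^{T} e t ⊗ |t̂⟩` of a sequence of states `e`. -/
noncomputable def historyVec (N T : ℕ) (e : ℕ → CompBasis N → ℂ) :
    CompBasis N × ClockBasis T → ℂ :=
  ∑ t ∈ Finset.range (T + 1), tensorClock (e t) (unaryClock T t)

lemma quadForm_historyVec (N T : ℕ) (e : ℕ → CompBasis N → ℂ)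
    (A : Matrix (CompBasis N) (CompBasis N) ℂ) (C : Matrix (ClockBasis T) (ClockBasis T) ℂ) :
    star (historyVec N T e) ⬝ᵥ (A ⊗ₖ C) *ᵥ historyVec N T e =
      ∑ t ∈ Finset.range (T + 1), ∑ t' ∈ Finset.range (T + 1),
        C (unaryClock T t) (unaryClock T t') * (star (e t) ⬝ᵥ A *ᵥ e t') := by
  simp only [historyVec, star_sum, mulVec_sum, sum_dotProduct, dotProduct_sum,
    quadForm_tensorClock]
  exact Finset.sum_comm

/-! ### Clock operators between legal clock states -/

lemma unaryClock_apply (T t : ℕ) (i : Fin T) :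
    unaryClock T t i = if (i : ℕ) < t then 1 else 0 := rfl

lemma unaryClock_inj {T t t' : ℕ} (ht : t ≤ T) (ht' : t' ≤ T) :
    unaryClock T t = unaryClock T t' ↔ t = t' := by
  refine ⟨fun h => ?_, fun h => h ▸ rfl⟩
  by_contra hne
  rcases lt_or_gt_of_ne hne with hlt | hlt
  · have := congrFun h ⟨t, by omega⟩
    simp [unaryClock_apply, hlt] at this
  · have := congrFun h ⟨t', by omega⟩
    simp [unaryClock_apply, hlt] at this

/-- The compression of `C` to the span of the legal clock states is `|â⟩⟨b̂|`. -/
def IsLegalUnit {T : ℕ} (C : Matrix (ClockBasis T) (ClockBasis T) ℂ) (a b : ℕ) : Prop :=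
  ∀ t ≤ T, ∀ t' ≤ T,
    C (unaryClock T t) (unaryClock T t') = if t = a ∧ t' = b then 1 else 0

lemma IsLegalUnit.quadForm_kronecker {N T : ℕ} {C : Matrix (ClockBasis T) (ClockBasis T) ℂ}
    {a b : ℕ} (hC : IsLegalUnit C a b) (ha : a ≤ T) (hb : b ≤ T) (e : ℕ → CompBasis N → ℂ)
    (A : Matrix (CompBasis N) (CompBasis N) ℂ) :
    star (historyVec N T e) ⬝ᵥ (A ⊗ₖ C) *ᵥ historyVec N T e = star (e a) ⬝ᵥ A *ᵥ e b := by
  rw [quadForm_historyVec, Finset.sum_eq_single a, Finset.sum_eq_single b]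
  · rw [hC a ha b hb]; simp
  · intro t' ht' hne
    rw [hC a ha t' (by simpa [Nat.lt_succ_iff] using ht')]; simp [hne]
  · intro h; exact absurd (Finset.mem_range.mpr (by omega)) h
  · intro t ht hne
    refine Finset.sum_eq_zero fun t' ht' => ?_
    rw [hC t (by simpa [Nat.lt_succ_iff] using ht) t' (by simpa [Nat.lt_succ_iff] using ht')]
    simp [hne]
  · intro h; exact absurd (Finset.mem_range.mpr (by omega)) h

lemma IsLegalUnit.conjTranspose {T : ℕ} {C : Matrix (ClockBasis T) (ClockBasis T) ℂ}
    {a b : ℕ} (hC : IsLegalUnit C a b) : IsLegalUnit Cᴴ b a := by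
  intro t ht t' ht'
  rw [conjTranspose_apply, hC t' ht' t ht]
  by_cases h1 : t = b <;> by_cases h2 : t' = a <;> simp [h1, h2]

/-- A diagonal 0/1 clock operator that selects only `|â⟩` among the legal states. -/
lemma isLegalUnit_diagonal {T : ℕ} (p : ClockBasis T → Prop) [DecidablePred p] (a : ℕ)
    (h : ∀ t ≤ T, (p (unaryClock T t) ↔ t = a)) :
    IsLegalUnit (diagonal fun g => if p g then (1 : ℂ) else 0) a a := by
  intro t ht t' ht'
  by_cases htt : t = t'
  · subst htt
    simp [h t ht]
  · rw [diagonal_apply_ne _ (by rwa [Ne, unaryClock_inj ht ht'])]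
    rw [if_neg]
    rintro ⟨rfl, rfl⟩
    exact htt rfl

lemma isLegalUnit_cproj_zero {T : ℕ} (hT : 0 < T) : IsLegalUnit (cproj T ⟨0, hT⟩ 0) 0 0 := by
  refine isLegalUnit_diagonal _ _ fun t ht => ?_
  simp only [unaryClock_apply]
  split_ifs with h <;> simp at h ⊢ <;> omega

lemma isLegalUnit_cproj_last {T : ℕ} (s : Fin T) (hs : (s : ℕ) + 1 = T) :
    IsLegalUnit (cproj T s 1) T T := by
  refine isLegalUnit_diagonal _ _ fun t ht => ?_
  simp only [unaryClock_apply]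
  split_ifs with h <;> simp at h ⊢ <;> omega

lemma isLegalUnit_cproj2 {T : ℕ} (i j : Fin T) (hij : (j : ℕ) = i + 1) :
    IsLegalUnit (cproj2 T i j 1 0) j j := by
  refine isLegalUnit_diagonal _ _ fun t ht => ?_
  simp only [unaryClock_apply]
  split_ifs with h h' <;> simp <;> omega

lemma isLegalUnit_Aterm {T : ℕ} (s : Fin T) : IsLegalUnit (Aterm T s) (s + 1) (s + 1) := by
  unfold Aterm
  split_ifs with h
  · exact isLegalUnit_cproj2 s ⟨s + 1, h⟩ rfl
  · have hs : (s : ℕ) + 1 = T := by omega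
    have := isLegalUnit_cproj_last s hs
    rwa [hs]

lemma isLegalUnit_Bterm {T : ℕ} (s : Fin T) : IsLegalUnit (Bterm T s) s s := by
  unfold Bterm
  split_ifs with h
  · exact isLegalUnit_cproj2 _ s (by simp; omega)
  · obtain ⟨s, hs⟩ := s
    obtain rfl : s = 0 := by simpa using h
    exact isLegalUnit_cproj_zero hs

lemma isLegalUnit_cflip {T : ℕ} (s : Fin T) : IsLegalUnit (cflip T s) (s + 1) s := by
  intro t ht t' ht'
  unfold cflip
  congr 1
  rw [eq_iff_iff]
  constructor
  · rintro ⟨h1, h2, h3⟩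
    have h1' : (s : ℕ) < t := by
      by_contra h; simp [unaryClock_apply, h] at h1
    have h2' : t' ≤ s := by
      by_contra! h; simp [unaryClock_apply, h] at h2
    constructor
    · by_contra hne
      have hs : (s : ℕ) + 1 < t := by omega
      have := h3 ⟨s + 1, by omega⟩ (by simp [Fin.ext_iff])
      simp [unaryClock_apply, hs, show ¬ ((s : ℕ) + 1 < t') by omega] at this
    · by_contra hne
      have hs : t' < s := by omega
      have := h3 ⟨t', by omega⟩ (by simp [Fin.ext_iff]; omega)
      simp [unaryClock_apply, show t' < t by omega] at this
  · rintro ⟨rfl, rfl⟩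
    refine ⟨by simp [unaryClock_apply], by simp [unaryClock_apply], fun i hi => ?_⟩
    have hi' : (i : ℕ) ≠ s := fun h => hi (Fin.ext h)
    simp only [unaryClock_apply]
    split_ifs <;> first | rfl | omega

lemma Sclock_unaryClock (T t t' : ℕ) : Sclock T (unaryClock T t) (unaryClock T t') = 0 := by
  unfold Sclock
  rw [Matrix.sum_apply]
  refine Finset.sum_eq_zero fun i _ => ?_
  rw [Matrix.sum_apply]
  refine Finset.sum_eq_zero fun j _ => ?_
  split_ifs with hij
  · unfold cproj2
    rw [diagonal_apply]
    split_ifs with h1 h2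
    · exfalso
      obtain ⟨ha, hb⟩ := h2
      simp only [unaryClock_apply] at ha hb
      have : (i : ℕ) < j := hij
      split_ifs at ha hb <;> omega
    · rfl
    · rfl
  · rfl

/-! ### Hermiticity -/

lemma isHermitian_diagonal_ite {n : Type*} [DecidableEq n] (p : n → Prop) [DecidablePred p] :
    (diagonal fun g => if p g then (1 : ℂ) else 0).IsHermitian := by
  rw [Matrix.IsHermitian, diagonal_conjTranspose]
  congr 1
  ext g
  by_cases h : p g <;> simp [h]

lemma isHermitian_kronecker {n c : Type*} {A : Matrix n n ℂ} {C : Matrix c c ℂ}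
    (hA : A.IsHermitian) (hC : C.IsHermitian) : (A ⊗ₖ C).IsHermitian := by
  rw [Matrix.IsHermitian, conjTranspose_kronecker, hA.eq, hC.eq]

lemma isHermitian_sum {n ι : Type*} (s : Finset ι) (f : ι → Matrix n n ℂ)
    (h : ∀ i ∈ s, (f i).IsHermitian) : (∑ i ∈ s, f i).IsHermitian := by
  rw [Matrix.IsHermitian, conjTranspose_sum]
  exact Finset.sum_congr rfl fun i hi => h i hi

lemma isHermitian_Hprop3 (N T : ℕ) (U : Fin T → Matrix (CompBasis N) (CompBasis N) ℂ)
    (s : Fin T) : (Hprop3 N T U s).IsHermitian := by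
  have hA : (Aterm T s).IsHermitian := by
    unfold Aterm; split_ifs <;> exact isHermitian_diagonal_ite _
  have hB : (Bterm T s).IsHermitian := by
    unfold Bterm; split_ifs <;> exact isHermitian_diagonal_ite _
  unfold Hprop3
  rw [Matrix.IsHermitian, conjTranspose_smul, conjTranspose_sub, conjTranspose_sub,
    conjTranspose_add, conjTranspose_kronecker, conjTranspose_kronecker, conjTranspose_kronecker,
    conjTranspose_kronecker, hA.eq, hB.eq, conjTranspose_one, conjTranspose_conjTranspose,
    conjTranspose_conjTranspose, sub_right_comm]
  simp

lemma isHermitian_H (N m T : ℕ) (hN : 0 < N) (hT : 0 < T)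
    (U : Fin T → Matrix (CompBasis N) (CompBasis N) ℂ) :
    (Hcomp3 N m T hN hT U + Hclock3 N T).IsHermitian := by
  refine (((?_ : Matrix.IsHermitian _).add ?_).add ?_).add ?_
  · exact isHermitian_sum _ _ fun i _ =>
      isHermitian_kronecker (isHermitian_diagonal_ite _) (isHermitian_diagonal_ite _)
  · exact isHermitian_kronecker (isHermitian_diagonal_ite _) (isHermitian_diagonal_ite _)
  · exact isHermitian_sum _ _ fun s _ => isHermitian_Hprop3 N T U s
  · have hS : (Sclock T).IsHermitian := by
      refine isHermitian_sum _ _ fun i _ => isHermitian_sum _ _ fun j _ => ?_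
      split_ifs
      · exact isHermitian_diagonal_ite _
      · exact isHermitian_zero
    unfold Hclock3
    rw [Matrix.IsHermitian, conjTranspose_smul, (isHermitian_kronecker isHermitian_one hS).eq]
    simp

/-! ### Energy of the history state -/

lemma star_dotProduct_mulVec_unitary {n : Type*} [Fintype n] [DecidableEq n] {V : Matrix n n ℂ}
    (hV : V ∈ Matrix.unitaryGroup n ℂ) (x : n → ℂ) :
    star (V *ᵥ x) ⬝ᵥ (V *ᵥ x) = star x ⬝ᵥ x := by
  rw [star_mulVec, dotProduct_mulVec, vecMul_vecMul, ← star_eq_conjTranspose,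
    (Matrix.mem_unitaryGroup_iff').mp hV, vecMul_one]

lemma evolve_succ_fin {n : Type*} [Fintype n] [DecidableEq n] {T : ℕ}
    (U : Fin T → Matrix n n ℂ) (ψ : n → ℂ) (s : Fin T) :
    evolve T U ψ (s + 1) = U s *ᵥ evolve T U ψ s := by
  simp [evolve]

lemma star_dotProduct_evolve {n : Type*} [Fintype n] [DecidableEq n] {T : ℕ}
    {U : Fin T → Matrix n n ℂ} (hU : ∀ s, U s ∈ Matrix.unitaryGroup n ℂ) (ψ : n → ℂ) (t : ℕ) :
    star (evolve T U ψ t) ⬝ᵥ evolve T U ψ t = star ψ ⬝ᵥ ψ := by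
  induction t with
  | zero => rfl
  | succ t ih =>
    rw [← ih]
    simp only [evolve]
    split_ifs with h
    · exact star_dotProduct_mulVec_unitary (hU _) _
    · simp

/-- Extending a proof by zeroed ancillas preserves the norm: the basis states that contribute are
the zero-extensions of basis states of the proof register. -/
lemma star_dotProduct_inputVec (N m : ℕ) (hm : m ≤ N) (ξ : (Fin m → Fin 2) → ℂ) :
    star (inputVec N m hm ξ) ⬝ᵥ inputVec N m hm ξ = star ξ ⬝ᵥ ξ := by
  simp only [dotProduct, Pi.star_apply]
  symm
  refine Finset.sum_of_injOn
    (fun (x : Fin m → Fin 2) (i : Fin N) => if h : (i : ℕ) < m then x ⟨i, h⟩ else 0) ?_ ?_ ?_ ?_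
  · intro x _ y _ hxy
    ext j
    have := congrFun hxy (Fin.castLE hm j)
    simp at this
    rw [this]
  · intro x _; simp
  · intro f _ hf
    have : ¬ ∀ i : Fin N, m ≤ (i : ℕ) → f i = 0 := by
      intro h
      apply hf
      refine ⟨fun j => f (Fin.castLE hm j), by simp, ?_⟩
      ext i
      by_cases hi : (i : ℕ) < m
      · simp [hi]
      · simp [hi, h i (by omega)]
    simp [inputVec, this]
  · intro x _
    have : ∀ i : Fin N, m ≤ (i : ℕ) →
        (if h : (i : ℕ) < m then x ⟨i, h⟩ else 0) = 0 := fun i hi => by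
      simp [show ¬ (i : ℕ) < m by omega]
    unfold inputVec
    rw [if_pos this]
    simp

lemma qproj_mulVec_inputVec (N m : ℕ) (hm : m ≤ N) (ξ : (Fin m → Fin 2) → ℂ) (i : Fin N)
    (hi : m ≤ (i : ℕ)) : qproj N i 1 *ᵥ inputVec N m hm ξ = 0 := by
  ext f
  rw [qproj, mulVec_diagonal]
  by_cases h : f i = 1
  · have : ¬ ∀ i : Fin N, m ≤ (i : ℕ) → f i = 0 := fun h' => by
      simp [h' i hi] at h
    simp [inputVec, this]
  · simp [h]

lemma qproj_zero_add_one (N : ℕ) (i : Fin N) (x : CompBasis N → ℂ) :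
    star x ⬝ᵥ qproj N i 0 *ᵥ x
      + ((∑ f, Complex.normSq ((qproj N i 1 *ᵥ x) f) : ℝ) : ℂ) = star x ⬝ᵥ x := by
  push_cast
  simp only [dotProduct, ← Finset.sum_add_distrib]
  refine Finset.sum_congr rfl fun f _ => ?_
  rw [qproj, qproj, mulVec_diagonal, mulVec_diagonal]
  have h2 : f i = 0 ∨ f i = 1 := by omega
  rcases h2 with h | h
  · simp [h]
  · simp [h, Complex.normSq_eq_conj_mul_self]

/-- A correct propagation step costs no energy: all four terms equal `± ‖ψ‖²`. -/
lemma quadForm_Hprop3 (N T : ℕ) (U : Fin T → Matrix (CompBasis N) (CompBasis N) ℂ)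
    (hU : ∀ s, U s ∈ Matrix.unitaryGroup (CompBasis N) ℂ) (ψ : CompBasis N → ℂ) (s : Fin T) :
    star (historyVec N T (evolve T U ψ)) ⬝ᵥ Hprop3 N T U s *ᵥ historyVec N T (evolve T U ψ)
      = 0 := by
  have hs : (s : ℕ) + 1 ≤ T := s.isLt
  have hs' : (s : ℕ) ≤ T := s.isLt.le
  have h4 : star (evolve T U ψ s) ⬝ᵥ (U s)ᴴ *ᵥ evolve T U ψ (s + 1) = star ψ ⬝ᵥ ψ := by
    rw [dotProduct_mulVec, ← star_mulVec, ← evolve_succ_fin, star_dotProduct_evolve hU]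
  unfold Hprop3
  rw [smul_mulVec, dotProduct_smul, sub_mulVec, sub_mulVec, add_mulVec, dotProduct_sub,
    dotProduct_sub, dotProduct_add, (isLegalUnit_Aterm s).quadForm_kronecker hs hs,
    (isLegalUnit_Bterm s).quadForm_kronecker hs' hs',
    (isLegalUnit_cflip s).quadForm_kronecker hs hs',
    (isLegalUnit_cflip s).conjTranspose.quadForm_kronecker hs' hs, h4, ← evolve_succ_fin,
    one_mulVec, one_mulVec, star_dotProduct_evolve hU, star_dotProduct_evolve hU]
  simp

lemma quadForm_Hclock3 (N T : ℕ) (e : ℕ → CompBasis N → ℂ) :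
    star (historyVec N T e) ⬝ᵥ Hclock3 N T *ᵥ historyVec N T e = 0 := by
  unfold Hclock3
  rw [smul_mulVec, dotProduct_smul, quadForm_historyVec]
  simp [Sclock_unaryClock]

lemma norm_historyVec (N T : ℕ) (e : ℕ → CompBasis N → ℂ)
    (he : ∀ t, star (e t) ⬝ᵥ e t = 1) :
    star (historyVec N T e) ⬝ᵥ historyVec N T e = (T : ℂ) + 1 := by
  have h := quadForm_historyVec N T e 1 1
  rw [one_kronecker_one, one_mulVec] at h
  rw [h]
  have : ∀ t ∈ Finset.range (T + 1), ∑ t' ∈ Finset.range (T + 1),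
      (1 : Matrix (ClockBasis T) (ClockBasis T) ℂ) (unaryClock T t) (unaryClock T t') *
        (star (e t) ⬝ᵥ (1 : Matrix (CompBasis N) (CompBasis N) ℂ) *ᵥ e t') = 1 := by
    intro t ht
    rw [Finset.sum_eq_single t]
    · simp [he]
    · intro t' ht' hne
      rw [Finset.mem_range] at ht ht'
      rw [one_apply_ne (by rw [Ne, unaryClock_inj (by omega) (by omega)]; exact hne.symm),
        zero_mul]
    · intro h; exact absurd ht h
  rw [Finset.sum_congr rfl this]
  simp

/-- The energy of the history state is the rejection probability. -/
lemma quadForm_H (N m T : ℕ) (hN : 0 < N) (hm : m ≤ N) (hT : 0 < T)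
    (U : Fin T → Matrix (CompBasis N) (CompBasis N) ℂ)
    (hU : ∀ s, U s ∈ Matrix.unitaryGroup (CompBasis N) ℂ)
    (ξ : (Fin m → Fin 2) → ℂ) (hξ : star ξ ⬝ᵥ ξ = 1) :
    star (historyVec N T (evolve T U (inputVec N m hm ξ))) ⬝ᵥ
      (Hcomp3 N m T hN hT U + Hclock3 N T) *ᵥ historyVec N T (evolve T U (inputVec N m hm ξ))
      = ((1 - accProb N m T hN hm U ξ : ℝ) : ℂ) := by
  unfold Hcomp3 Hin3 Hout3
  rw [add_mulVec, add_mulVec, add_mulVec, dotProduct_add, dotProduct_add, dotProduct_add,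
    quadForm_Hclock3, sum_mulVec, sum_mulVec, dotProduct_sum, dotProduct_sum,
    Finset.sum_eq_zero (s := Finset.univ) fun s _ => quadForm_Hprop3 N T U hU _ s,
    Finset.sum_eq_zero (s := Finset.univ.filter _) ?_,
    (isLegalUnit_cproj_last ⟨T - 1, _⟩ (by simp; omega)).quadForm_kronecker le_rfl le_rfl]
  · have h := qproj_zero_add_one N ⟨0, hN⟩ (evolve T U (inputVec N m hm ξ) T)
    rw [star_dotProduct_evolve hU, star_dotProduct_inputVec, hξ] at h
    rw [Complex.ofReal_sub, accProb, Complex.ofReal_one, ← h]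
    ring
  · intro i hi
    rw [(isLegalUnit_cproj_zero hT).quadForm_kronecker (Nat.zero_le _) (Nat.zero_le _)]
    simp only [evolve]
    rw [qproj_mulVec_inputVec N m hm ξ i (by simpa using hi), dotProduct_zero]


/-- **Completeness, 3-local.** Let `ε > 0`. If the circuit accepts some unit
proof `ξ` with probability more than `1 − ε`, then the 3-local Hamiltonian
`H = H_in + H_out + H_prop + H_clock` has an eigenvalue smaller than `ε/(T+1)`. -/
theorem threeLocal_completeness (N m T : ℕ) (hN : 0 < N) (hm : m ≤ N) (hT : 2 ≤ T)
    (U : Fin T → Matrix (CompBasis N) (CompBasis N) ℂ)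
    (hU : ∀ s, U s ∈ Matrix.unitaryGroup (CompBasis N) ℂ)
    (ε : ℝ) (hε : 0 < ε)
    (hacc : ∃ ξ : (Fin m → Fin 2) → ℂ, star ξ ⬝ᵥ ξ = 1 ∧
      1 - ε < accProb N m T hN hm U ξ) :
    ∃ μ : ℝ, μ < ε / (T + 1) ∧
      ∃ v : CompBasis N × ClockBasis T → ℂ, v ≠ 0 ∧
        (Hcomp3 N m T hN (by omega) U + Hclock3 N T) *ᵥ v = (μ : ℂ) • v := by
  obtain ⟨ξ, hξ, hacc⟩ := hacc
  refine exists_eigenvalue_lt (isHermitian_H N m T hN _ U) _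
    (historyVec N T (evolve T U (inputVec N m hm ξ))) ?_
  rw [quadForm_H N m T hN hm (by omega) U hU ξ hξ, Complex.ofReal_re, norm_historyVec N T _
    fun t => by rw [star_dotProduct_evolve hU, star_dotProduct_inputVec, hξ]]
  have hT' : ((T : ℂ) + 1).re = (T : ℝ) + 1 := by simp
  have hpos : (T : ℝ) + 1 ≠ 0 := by positivity
  rw [hT', div_mul_cancel₀ _ hpos]
  linarith
end

section
/- There exist constants c > 0 and T₀ such that the following holds for all N, m ≤ N, T ≥ max(T₀, N), all unitaries U_1, ..., U_T on ℂ^{2^N}, and all 0 < ε ≤ 1/4: if the acceptance probability of the circuit is less than ε for every unit vector ξ ∈ ℂ^{2^m}, then every eigenvalue of the 3-local Hamiltonian H = H_in + H_out + H_prop + H_clock is larger than c/T³. -/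
/-!
Split an eigenvector `v = w + r` into the parts supported on legal (unary) and on illegal clock
states.

*Illegal part.* `H_clock` is diagonal and at least `T¹²` on illegal states (`form_Hclock3`,
`one_le_inversions`), while `‖H_comp‖ ≤ 4T` (`norm_Hcomp3_le`). Although `H_comp` need not be
positive off the legal subspace, the cross terms are therefore absorbed by `T¹² ‖r‖²` at the price of
a small multiple `‖w‖² / T³` of the legal part.

*Legal part.* Write `ψ t` for the slice of `w` at clock state `1^t 0^{T-t}`. On legal vectors the
energy of `H_comp` is `Σ_{i>m} ‖|1⟩⟨1|_i ψ 0‖² + ‖|0⟩⟨0|_1 ψ T‖² + ½ Σ_s ‖ψ (s+1) - U_s ψ s‖²`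
(`form_Hcomp3_legal`). If this energy is `E`, then Cauchy–Schwarz shows that every `ψ t` is within
`√(2TE)` of `U_t ⋯ U_1 (ψ 0)`, and `ψ 0` is within `√E` of a valid input `x = ξ ⊗ |0⋯0⟩`. Soundness
forces the final state of `x` to have at least `3/4` of its weight on rejecting states, while the
output term says `ψ T` has weight at most `E` there; hence `‖x‖² ≤ 8 (T + 1) E`, and so
`‖w‖² = Σ_t ‖ψ t‖² ≤ 114 T² E` (`history_energy`). This direct comparison gives a bound of order
`1/T²` on the legal subspace, which for `T ≥ 228` leaves room for the error `1/T³` above.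
-/


open Matrix
open scoped Kronecker

/-! ### Euclidean norms and unitaries -/

/-- Euclidean norm of a coordinate vector. -/
noncomputable def vnorm {n : Type*} [Fintype n] (x : n → ℂ) : ℝ := ‖WithLp.toLp 2 x‖

section Norm

variable {n : Type*} [Fintype n]

lemma vnorm_nonneg (x : n → ℂ) : 0 ≤ vnorm x := norm_nonneg _

lemma vnorm_add_le (x y : n → ℂ) : vnorm (x + y) ≤ vnorm x + vnorm y :=
  norm_add_le (WithLp.toLp 2 x) (WithLp.toLp 2 y)

lemma vnorm_sub_comm (x y : n → ℂ) : vnorm (x - y) = vnorm (y - x) :=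
  norm_sub_rev (WithLp.toLp 2 x) (WithLp.toLp 2 y)

lemma vnorm_smul (c : ℂ) (x : n → ℂ) : vnorm (c • x) = ‖c‖ * vnorm x :=
  norm_smul c (WithLp.toLp 2 x)

lemma vnorm_sq (x : n → ℂ) : vnorm x ^ 2 = ∑ i, Complex.normSq (x i) := by
  simp [vnorm, EuclideanSpace.norm_sq_eq, Complex.normSq_eq_norm_sq]

lemma vnorm_pos {x : n → ℂ} (hx : x ≠ 0) : 0 < vnorm x := by
  rw [vnorm, norm_pos_iff]
  simpa using hx

lemma star_dotProduct_self (x : n → ℂ) : star x ⬝ᵥ x = ((vnorm x ^ 2 : ℝ) : ℂ) := by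
  rw [vnorm_sq, dotProduct]
  push_cast
  refine Finset.sum_congr rfl fun i _ => ?_
  rw [Complex.normSq_eq_conj_mul_self]
  rfl

open scoped Matrix.Norms.L2Operator in
lemma norm_form_le [DecidableEq n] (A : Matrix n n ℂ) (x y : n → ℂ) :
    ‖star x ⬝ᵥ A *ᵥ y‖ ≤ ‖A‖ * vnorm x * vnorm y := by
  have h : star x ⬝ᵥ A *ᵥ y = inner ℂ (WithLp.toLp 2 x) (WithLp.toLp 2 (A *ᵥ y)) := by
    rw [EuclideanSpace.inner_eq_star_dotProduct, dotProduct_comm]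
  rw [h]
  calc _ ≤ _ := norm_inner_le_norm _ _
    _ ≤ ‖WithLp.toLp 2 x‖ * (‖A‖ * ‖WithLp.toLp 2 y‖) := by
        gcongr
        exact Matrix.l2_opNorm_mulVec A (WithLp.toLp 2 y)
    _ = _ := by simp only [vnorm]; ring

lemma vnorm_unitary [DecidableEq n] {U : Matrix n n ℂ} (hU : U ∈ Matrix.unitaryGroup n ℂ)
    (x : n → ℂ) : vnorm (U *ᵥ x) = vnorm x := by
  have h : star (U *ᵥ x) ⬝ᵥ U *ᵥ x = star x ⬝ᵥ x := by
    rw [star_mulVec, ← dotProduct_mulVec, mulVec_mulVec, ← star_eq_conjTranspose,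
      Matrix.mem_unitaryGroup_iff'.mp hU, one_mulVec]
  rw [star_dotProduct_self, star_dotProduct_self, Complex.ofReal_inj] at h
  exact (sq_eq_sq₀ (vnorm_nonneg _) (vnorm_nonneg _)).mp h

/-- The form of twice `H_prop,s` on the two slices `x`, `y` at times `s`, `s + 1` is the squared
propagation error `‖y - U x‖²`. -/
lemma vnorm_sub_unitary_sq [DecidableEq n] {U : Matrix n n ℂ}
    (hU : U ∈ Matrix.unitaryGroup n ℂ) (x y : n → ℂ) :
    star y ⬝ᵥ y + star x ⬝ᵥ x - star y ⬝ᵥ U *ᵥ x - star x ⬝ᵥ Uᴴ *ᵥ y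
      = ((vnorm (y - U *ᵥ x) ^ 2 : ℝ) : ℂ) := by
  rw [← star_dotProduct_self, star_sub, sub_dotProduct, dotProduct_sub, dotProduct_sub,
    star_dotProduct_self (U *ᵥ x), vnorm_unitary hU, ← star_dotProduct_self x,
    star_mulVec, ← dotProduct_mulVec]
  ring

end Norm

/-! ### Legal clock states -/

section Legal

/-- A clock state is illegal if some `0` precedes a `1`; the legal ones are exactly the unary states
`1^t 0^{T-t}`. -/
abbrev Illegal {T : ℕ} (g : ClockBasis T) : Prop :=
  ∃ i j : Fin T, i < j ∧ g i = 0 ∧ g j = 1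

/-- The quadratic form of `M ⊗ C`, expanded over the clock slices `w (·, g)`. -/
lemma form_kronecker {n k : Type*} [Fintype n] [Fintype k] (M : Matrix n n ℂ) (C : Matrix k k ℂ)
    (w : n × k → ℂ) :
    star w ⬝ᵥ (M ⊗ₖ C) *ᵥ w =
      ∑ g, ∑ g', C g g' * (star (fun f => w (f, g)) ⬝ᵥ M *ᵥ fun f => w (f, g')) := by
  simp only [dotProduct, mulVec, Fintype.sum_prod_type, kroneckerMap_apply, Finset.mul_sum,
    Pi.star_apply]
  rw [Finset.sum_comm]
  refine Finset.sum_congr rfl fun g _ => ?_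
  rw [Finset.sum_comm' (t' := Finset.univ) (s' := fun _ => Finset.univ) (by simp)]
  rw [Finset.sum_comm]
  conv_rhs => rw [Finset.sum_comm]
  refine Finset.sum_congr rfl fun f _ => ?_
  rw [Finset.sum_comm' (t' := Finset.univ) (s' := fun _ => Finset.univ) (by simp)]
  refine Finset.sum_congr rfl fun g' _ => ?_
  refine Finset.sum_congr rfl fun f' _ => ?_
  ring

lemma unaryClock_injOn (T : ℕ) : Set.InjOn (unaryClock T) (Finset.range (T + 1)) := by
  intro a ha b hb hab
  simp only [Finset.coe_range, Set.mem_Iio] at ha hb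
  by_contra hne
  rcases lt_or_gt_of_ne hne with h | h
  · have := congrFun hab ⟨a, by omega⟩
    simp [unaryClock, h] at this
  · have := congrFun hab ⟨b, by omega⟩
    simp [unaryClock, h] at this

/-- A clock state without an inversion `01` is a unary clock state. -/
lemma exists_unaryClock {T : ℕ} {g : ClockBasis T}
    (hg : ¬ Illegal g) :
    ∃ t ∈ Finset.range (T + 1), unaryClock T t = g := by
  have h01 : ∀ i, g i ≠ 0 → g i = 1 := fun i h => by
    have := (g i).isLt
    omega
  by_cases hall : ∃ k : ℕ, ∃ h : k < T, g ⟨k, h⟩ = 0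
  · classical
    obtain ⟨hk, hk0⟩ := Nat.find_spec hall
    refine ⟨Nat.find hall, Finset.mem_range.mpr (by omega), funext fun i => ?_⟩
    by_cases hi : (i : ℕ) < Nat.find hall
    · have := Nat.find_min hall hi
      push Not at this
      simp [unaryClock, hi, h01 i (this i.isLt)]
    · simp only [unaryClock, hi, if_false]
      by_contra hne
      have h1 := h01 i (Ne.symm hne)
      refine hg ⟨⟨_, hk⟩, i, ?_, hk0, h1⟩
      refine lt_of_le_of_ne (by simpa [Fin.le_def] using hi) ?_
      intro he
      rw [he] at hk0
      exact hne hk0.symm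
  · push Not at hall
    refine ⟨T, by simp, funext fun i => ?_⟩
    simp [unaryClock, h01 i (hall i i.isLt)]

/-- A sum over clock states that vanishes on illegal states is a sum over time. -/
lemma sum_legal {T : ℕ} {M : Type*} [AddCommMonoid M] (F : ClockBasis T → M)
    (hF : ∀ g, Illegal g → F g = 0) :
    ∑ g, F g = ∑ t ∈ Finset.range (T + 1), F (unaryClock T t) := by
  classical
  rw [← Finset.sum_image (f := F) (unaryClock_injOn T)]
  symm
  refine Finset.sum_subset (Finset.subset_univ _) fun g _ hg => hF g ?_
  by_contra h
  exact hg (Finset.mem_image.mpr (exists_unaryClock h))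

variable {n : Type*} [Fintype n] {T : ℕ}

/-- On legally supported vectors, a clock operator acting as the matrix unit `|â⟩⟨b̂|` on the legal
subspace contributes a single term. -/
lemma form_legal {w : n × ClockBasis T → ℂ}
    (hw : ∀ f g, Illegal g → w (f, g) = 0)
    (M : Matrix n n ℂ) (C : Matrix (ClockBasis T) (ClockBasis T) ℂ) {a b : ℕ}
    (ha : a ≤ T) (hb : b ≤ T)
    (hC : ∀ t t', t ≤ T → t' ≤ T →
      C (unaryClock T t) (unaryClock T t') = if t = a ∧ t' = b then 1 else 0) :
    star w ⬝ᵥ (M ⊗ₖ C) *ᵥ w =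
      star (fun f => w (f, unaryClock T a)) ⬝ᵥ M *ᵥ fun f => w (f, unaryClock T b) := by
  rw [form_kronecker, sum_legal]
  · have h : ∀ t ∈ Finset.range (T + 1), ∑ g', C (unaryClock T t) g' *
          (star (fun f => w (f, unaryClock T t)) ⬝ᵥ M *ᵥ fun f => w (f, g')) =
        if t = a then star (fun f => w (f, unaryClock T a)) ⬝ᵥ M *ᵥ
          (fun f => w (f, unaryClock T b)) else 0 := by
      intro t ht
      rw [Finset.mem_range] at ht
      rw [sum_legal]
      · rw [Finset.sum_congr rfl (g := fun t' => if t' = b then (if t = a then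
          star (fun f => w (f, unaryClock T a)) ⬝ᵥ M *ᵥ
          (fun f => w (f, unaryClock T b)) else 0) else 0)]
        · rw [Finset.sum_ite_eq', if_pos (by simp; omega)]
        · intro t' ht'
          rw [Finset.mem_range] at ht'
          rw [hC t t' (by omega) (by omega)]
          by_cases h1 : t = a <;> by_cases h2 : t' = b <;> simp [h1, h2]
      · intro g hg
        have : (fun f => w (f, g)) = 0 := funext fun f => hw f g hg
        simp [this]
    rw [Finset.sum_congr rfl h, Finset.sum_ite_eq', if_pos (by simp; omega)]
  · intro g hg
    have : (fun f => w (f, g)) = 0 := funext fun f => hw f g hg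
    simp [this]

lemma unaryClock_eq_iff {t t' : ℕ} (ht : t ≤ T) (ht' : t' ≤ T) :
    unaryClock T t = unaryClock T t' ↔ t = t' :=
  ⟨fun h => unaryClock_injOn T (by simp; omega) (by simp; omega) h, fun h => h ▸ rfl⟩

lemma unaryClock_eq_one (t : ℕ) (i : Fin T) : unaryClock T t i = 1 ↔ (i : ℕ) < t := by
  simp [unaryClock]

lemma unaryClock_eq_zero (t : ℕ) (i : Fin T) : unaryClock T t i = 0 ↔ t ≤ (i : ℕ) := by
  simp [unaryClock]

lemma cproj_zero_legal (hT : 0 < T) {t t' : ℕ} (ht : t ≤ T) (ht' : t' ≤ T) :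
    cproj T ⟨0, hT⟩ 0 (unaryClock T t) (unaryClock T t') = if t = 0 ∧ t' = 0 then 1 else 0 := by
  simp only [cproj, diagonal_apply, unaryClock_eq_iff ht ht', unaryClock_eq_zero, ← ite_and]
  exact if_congr (by omega) rfl rfl

lemma cproj_last_legal (hT : 0 < T) {t t' : ℕ} (ht : t ≤ T) (ht' : t' ≤ T) :
    cproj T ⟨T - 1, Nat.sub_lt hT one_pos⟩ 1 (unaryClock T t) (unaryClock T t')
      = if t = T ∧ t' = T then 1 else 0 := by
  simp only [cproj, diagonal_apply, unaryClock_eq_iff ht ht', unaryClock_eq_one, ← ite_and]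
  exact if_congr (by omega) rfl rfl

lemma Aterm_legal (s : Fin T) {t t' : ℕ} (ht : t ≤ T) (ht' : t' ≤ T) :
    Aterm T s (unaryClock T t) (unaryClock T t')
      = if t = s + 1 ∧ t' = s + 1 then 1 else 0 := by
  have := s.isLt
  unfold Aterm
  split_ifs with h
  all_goals
    simp only [cproj, cproj2, diagonal_apply, unaryClock_eq_iff ht ht', unaryClock_eq_one,
      unaryClock_eq_zero, ← ite_and]
    first
      | exact if_pos (by omega)
      | exact if_neg (by omega)

lemma Bterm_legal (s : Fin T) {t t' : ℕ} (ht : t ≤ T) (ht' : t' ≤ T) :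
    Bterm T s (unaryClock T t) (unaryClock T t') = if t = s ∧ t' = s then 1 else 0 := by
  have := s.isLt
  unfold Bterm
  split_ifs with h
  all_goals
    simp only [cproj, cproj2, diagonal_apply, unaryClock_eq_iff ht ht', unaryClock_eq_one,
      unaryClock_eq_zero, ← ite_and]
    first
      | exact if_pos (by omega)
      | exact if_neg (by omega)

lemma cflip_legal (s : Fin T) {t t' : ℕ} (ht : t ≤ T) (ht' : t' ≤ T) :
    cflip T s (unaryClock T t) (unaryClock T t') = if t = s + 1 ∧ t' = s then 1 else 0 := by
  have := s.isLt
  unfold cflip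
  refine if_congr ?_ rfl rfl
  rw [unaryClock_eq_one, unaryClock_eq_zero]
  constructor
  · rintro ⟨h1, h2, h3⟩
    constructor
    · by_contra hne
      have := h3 ⟨s + 1, by omega⟩ (by simp [Fin.ext_iff])
      rw [(unaryClock_eq_one _ _).mpr (by simp; omega), eq_comm, unaryClock_eq_one] at this
      simp at this
      omega
    · by_contra hne
      have := h3 ⟨t', by omega⟩ (by simp [Fin.ext_iff]; omega)
      rw [(unaryClock_eq_one _ _).mpr (by simp; omega), eq_comm, unaryClock_eq_one] at this
      simp at this
  · rintro ⟨rfl, rfl⟩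
    refine ⟨by omega, le_rfl, fun r hr => ?_⟩
    have : (r : ℕ) ≠ s := fun h => hr (Fin.ext h)
    simp only [unaryClock]
    exact if_congr (by omega) rfl rfl

end Legal

/-! ### Operator norm of `H_comp` -/

section OperatorNorm

open scoped Matrix.Norms.L2Operator

lemma norm_diagonal_ite_le {n : Type*} [Fintype n] [DecidableEq n] (p : n → Prop)
    [DecidablePred p] : ‖(diagonal fun i => if p i then (1 : ℂ) else 0)‖ ≤ 1 := by
  rw [Matrix.l2_opNorm_diagonal]
  refine (pi_norm_le_iff_of_nonneg zero_le_one).mpr fun i => ?_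
  split_ifs <;> simp

lemma norm_diagonal_kronecker_le {n k : Type*} [Fintype n] [DecidableEq n] [Fintype k]
    [DecidableEq k] (p : n → Prop) (q : k → Prop) [DecidablePred p] [DecidablePred q] :
    ‖(diagonal fun i => if p i then (1 : ℂ) else 0) ⊗ₖ
      (diagonal fun i => if q i then (1 : ℂ) else 0)‖ ≤ 1 := by
  rw [diagonal_kronecker_diagonal]
  have : (fun mn : n × k => (if p mn.1 then (1 : ℂ) else 0) * if q mn.2 then 1 else 0) =
      fun mn => if p mn.1 ∧ q mn.2 then 1 else 0 := by
    funext mn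
    by_cases h1 : p mn.1 <;> simp [h1]
  rw [this]
  exact norm_diagonal_ite_le _

lemma norm_one_kronecker_le {n k : Type*} [Fintype n] [DecidableEq n] [Fintype k]
    [DecidableEq k] (q : k → Prop) [DecidablePred q] :
    ‖(1 : Matrix n n ℂ) ⊗ₖ (diagonal fun i => if q i then (1 : ℂ) else 0)‖ ≤ 1 := by
  have := norm_diagonal_kronecker_le (fun _ : n => True) q
  simpa using this

variable {N T : ℕ}

lemma norm_one_kronecker_Aterm_le (s : Fin T) :
    ‖(1 : Matrix (CompBasis N) (CompBasis N) ℂ) ⊗ₖ Aterm T s‖ ≤ 1 := by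
  unfold Aterm
  split_ifs
  · exact norm_one_kronecker_le _
  · exact norm_one_kronecker_le _

lemma norm_one_kronecker_Bterm_le (s : Fin T) :
    ‖(1 : Matrix (CompBasis N) (CompBasis N) ℂ) ⊗ₖ Bterm T s‖ ≤ 1 := by
  unfold Bterm
  split_ifs
  · exact norm_one_kronecker_le _
  · exact norm_one_kronecker_le _

lemma cflip_conjTranspose_mul_self (s : Fin T) : (cflip T s)ᴴ * cflip T s = cproj T s 0 := by
  ext g g'
  simp only [mul_apply, conjTranspose_apply, cflip, cproj, diagonal_apply]
  rw [Finset.sum_eq_single (Function.update g s 1)]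
  · by_cases hg : g s = 0
    · by_cases h : g = g'
      · subst h
        simp +contextual [hg]
      · have : ¬ (g' s = 0 ∧ ∀ r, r ≠ s → g r = g' r) := by
          rintro ⟨h1, h2⟩
          refine h (funext fun r => ?_)
          by_cases hr : r = s
          · rw [hr, hg, h1]
          · exact h2 r hr
        have h' : ¬ (Function.update g s 1 s = 1 ∧ g' s = 0 ∧
            ∀ r, r ≠ s → Function.update g s 1 r = g' r) := by
          rintro ⟨-, h1, h2⟩
          exact this ⟨h1, fun r hr => by simpa [hr] using h2 r hr⟩
        rw [if_neg h', if_neg h, mul_zero]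
    · simp [hg]
  · intro h _ hne
    have : ¬ (h s = 1 ∧ g s = 0 ∧ ∀ r, r ≠ s → h r = g r) := by
      rintro ⟨h1, h2, h3⟩
      refine hne (funext fun r => ?_)
      by_cases hr : r = s
      · rw [hr, h1]; simp
      · simp [hr, h3 r hr]
    simp [this]
  · simp

/-- `(U ⊗ |1⟩⟨0|_s)ᴴ (U ⊗ |1⟩⟨0|_s)` is the projector `I ⊗ |0⟩⟨0|_s`, so the C*-identity bounds the
norm of the hopping term. -/
lemma norm_kronecker_cflip_le {U : Matrix (CompBasis N) (CompBasis N) ℂ}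
    (hU : U ∈ Matrix.unitaryGroup (CompBasis N) ℂ) (s : Fin T) : ‖U ⊗ₖ cflip T s‖ ≤ 1 := by
  have h : (U ⊗ₖ cflip T s)ᴴ * (U ⊗ₖ cflip T s) = 1 ⊗ₖ cproj T s 0 := by
    rw [conjTranspose_kronecker, ← mul_kronecker_mul, cflip_conjTranspose_mul_self,
      ← star_eq_conjTranspose, Matrix.mem_unitaryGroup_iff'.mp hU]
  have h2 := Matrix.l2_opNorm_conjTranspose_mul_self (U ⊗ₖ cflip T s)
  have h3 : ‖(1 : Matrix (CompBasis N) (CompBasis N) ℂ) ⊗ₖ cproj T s 0‖ ≤ 1 :=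
    norm_one_kronecker_le _
  rw [h] at h2
  nlinarith [norm_nonneg (U ⊗ₖ cflip T s)]

lemma norm_Hprop3_le {U : Fin T → Matrix (CompBasis N) (CompBasis N) ℂ}
    (hU : ∀ s, U s ∈ Matrix.unitaryGroup (CompBasis N) ℂ) (s : Fin T) :
    ‖Hprop3 N T U s‖ ≤ 2 := by
  unfold Hprop3
  have h1 := norm_one_kronecker_Aterm_le (N := N) s
  have h2 := norm_one_kronecker_Bterm_le (N := N) s
  have h3 := norm_kronecker_cflip_le (hU s) s
  have h4 : ‖(U s)ᴴ ⊗ₖ (cflip T s)ᴴ‖ ≤ 1 := by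
    rw [← conjTranspose_kronecker, Matrix.l2_opNorm_conjTranspose]
    exact h3
  refine (norm_smul_le _ _).trans ?_
  have h5 := norm_sub_le ((1 : Matrix (CompBasis N) (CompBasis N) ℂ) ⊗ₖ Aterm T s
      + (1 : Matrix (CompBasis N) (CompBasis N) ℂ) ⊗ₖ Bterm T s
      - U s ⊗ₖ cflip T s) ((U s)ᴴ ⊗ₖ (cflip T s)ᴴ)
  have h6 := norm_sub_le ((1 : Matrix (CompBasis N) (CompBasis N) ℂ) ⊗ₖ Aterm T s
      + (1 : Matrix (CompBasis N) (CompBasis N) ℂ) ⊗ₖ Bterm T s) (U s ⊗ₖ cflip T s)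
  have h7 := norm_add_le ((1 : Matrix (CompBasis N) (CompBasis N) ℂ) ⊗ₖ Aterm T s)
      ((1 : Matrix (CompBasis N) (CompBasis N) ℂ) ⊗ₖ Bterm T s)
  have h8 : ‖(1 / 2 : ℂ)‖ = 1 / 2 := by norm_num
  rw [h8]
  linarith

lemma norm_Hcomp3_le {m : ℕ} (hN : 0 < N) (hT : 0 < T) (hNT : N ≤ T)
    {U : Fin T → Matrix (CompBasis N) (CompBasis N) ℂ}
    (hU : ∀ s, U s ∈ Matrix.unitaryGroup (CompBasis N) ℂ) :
    ‖Hcomp3 N m T hN hT U‖ ≤ 4 * T := by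
  have hin : ‖Hin3 N m T hT‖ ≤ N := by
    refine (norm_sum_le_of_le _ (f := fun i => qproj N i 1 ⊗ₖ cproj T ⟨0, hT⟩ 0) (n := fun _ => 1)
      fun i _ => norm_diagonal_kronecker_le _ _).trans ?_
    rw [Finset.sum_const, nsmul_eq_mul, mul_one]
    exact_mod_cast (Finset.card_le_univ _).trans (by simp)
  have hout : ‖Hout3 N T hN hT‖ ≤ 1 := norm_diagonal_kronecker_le _ _
  have hprop : ‖∑ s : Fin T, Hprop3 N T U s‖ ≤ T * 2 := by
    refine (norm_sum_le_of_le _ fun s _ => norm_Hprop3_le hU s).trans ?_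
    simp
  have h1 := norm_add_le (Hin3 N m T hT + Hout3 N T hN hT) (∑ s : Fin T, Hprop3 N T U s)
  have h2 := norm_add_le (Hin3 N m T hT) (Hout3 N T hN hT)
  have h3 : (N : ℝ) ≤ T := by exact_mod_cast hNT
  have h4 : (1 : ℝ) ≤ T := by exact_mod_cast hT
  unfold Hcomp3
  linarith

/-- Adding `r` to `w` lowers the form by at most the norm bound on the cross terms and on the `r`
term; neither positivity nor hermiticity of `A` is needed. -/
lemma form_add_ge {n : Type*} [Fintype n] [DecidableEq n] (A : Matrix n n ℂ) {K : ℝ}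
    (hK : ‖A‖ ≤ K) (w r : n → ℂ) :
    (star w ⬝ᵥ A *ᵥ w).re - 2 * K * vnorm w * vnorm r - K * vnorm r ^ 2
      ≤ (star (w + r) ⬝ᵥ A *ᵥ (w + r)).re := by
  have key : ∀ x y : n → ℂ, -(K * vnorm x * vnorm y) ≤ (star x ⬝ᵥ A *ᵥ y).re := by
    intro x y
    have h1 := norm_form_le A x y
    have h2 := (abs_le.mp (Complex.abs_re_le_norm (star x ⬝ᵥ A *ᵥ y))).1
    have h3 : ‖A‖ * vnorm x * vnorm y ≤ K * vnorm x * vnorm y := by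
      have := vnorm_nonneg x
      have := vnorm_nonneg y
      gcongr
    linarith
  rw [star_add, mulVec_add, add_dotProduct, dotProduct_add, dotProduct_add]
  simp only [Complex.add_re]
  have h1 := key w r
  have h2 := key r w
  have h3 := key r r
  nlinarith

end OperatorNorm

/-! ### The clock penalty -/

section Clock

variable {N T : ℕ}

lemma Sclock_eq (T : ℕ) : Sclock T = diagonal fun g : ClockBasis T =>
    ∑ i : Fin T, ∑ j : Fin T, if i < j ∧ g i = 0 ∧ g j = 1 then (1 : ℂ) else 0 := by
  ext g g'
  simp only [Sclock, Matrix.sum_apply]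
  by_cases h : g = g'
  · subst h
    rw [diagonal_apply_eq]
    refine Finset.sum_congr rfl fun i _ => Finset.sum_congr rfl fun j _ => ?_
    by_cases hij : i < j <;> simp [hij, cproj2]
  · rw [diagonal_apply_ne _ h]
    refine Finset.sum_eq_zero fun i _ => Finset.sum_eq_zero fun j _ => ?_
    by_cases hij : i < j <;> simp [hij, cproj2, h]

/-- The number of inversions `01` in a clock state. -/
noncomputable def inversions (g : ClockBasis T) : ℝ :=
  ∑ i : Fin T, ∑ j : Fin T, if i < j ∧ g i = 0 ∧ g j = 1 then (1 : ℝ) else 0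

lemma inversions_nonneg (g : ClockBasis T) : 0 ≤ inversions g :=
  Finset.sum_nonneg fun i _ => Finset.sum_nonneg fun j _ => by split_ifs <;> norm_num

lemma one_le_inversions {g : ClockBasis T}
    (hg : ∃ i j : Fin T, i < j ∧ g i = 0 ∧ g j = 1) : 1 ≤ inversions g := by
  obtain ⟨i, j, h⟩ := hg
  have h0 : ∀ i j : Fin T, (0 : ℝ) ≤ if i < j ∧ g i = 0 ∧ g j = 1 then (1 : ℝ) else 0 :=
    fun i j => by split_ifs <;> norm_num
  calc (1 : ℝ) = if i < j ∧ g i = 0 ∧ g j = 1 then (1 : ℝ) else 0 := by rw [if_pos h]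
    _ ≤ ∑ j : Fin T, if i < j ∧ g i = 0 ∧ g j = 1 then (1 : ℝ) else 0 :=
        Finset.single_le_sum (f := fun j => if i < j ∧ g i = 0 ∧ g j = 1 then (1 : ℝ) else 0)
          (fun j _ => h0 i j) (Finset.mem_univ j)
    _ ≤ inversions g :=
        Finset.single_le_sum
          (f := fun i => ∑ j : Fin T, if i < j ∧ g i = 0 ∧ g j = 1 then (1 : ℝ) else 0)
          (fun i _ => Finset.sum_nonneg fun j _ => h0 i j) (Finset.mem_univ i)

lemma form_Hclock3 (v : CompBasis N × ClockBasis T → ℂ) :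
    (star v ⬝ᵥ Hclock3 N T *ᵥ v).re =
      (T : ℝ) ^ 12 * ∑ p, inversions p.2 * Complex.normSq (v p) := by
  have h : star v ⬝ᵥ Hclock3 N T *ᵥ v =
      (((T : ℝ) ^ 12 * ∑ p, inversions p.2 * Complex.normSq (v p) : ℝ) : ℂ) := by
    rw [Hclock3, Sclock_eq, ← diagonal_one, diagonal_kronecker_diagonal, smul_mulVec,
      dotProduct_smul, smul_eq_mul]
    push_cast
    congr 1
    simp only [dotProduct, mulVec_diagonal, Pi.star_apply]
    refine Finset.sum_congr rfl fun p _ => ?_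
    rw [Complex.normSq_eq_conj_mul_self, inversions]
    push_cast
    simp only [RCLike.star_def, apply_ite Complex.ofReal, Complex.ofReal_one, Complex.ofReal_zero]
    ring
  rw [h, Complex.ofReal_re]

end Clock

/-! ### `H_comp` on the legal subspace -/

section Legal

variable {N T : ℕ}

/-- The energy of a legally supported vector: with `ψ t` its clock slices, the hopping terms become
squared propagation errors. -/
lemma form_Hcomp3_legal {m : ℕ} (hN : 0 < N) (hT : 0 < T)
    {U : Fin T → Matrix (CompBasis N) (CompBasis N) ℂ}
    (hU : ∀ s, U s ∈ Matrix.unitaryGroup (CompBasis N) ℂ)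
    {w : CompBasis N × ClockBasis T → ℂ}
    (hw : ∀ f g, Illegal g → w (f, g) = 0)
    (ψ : ℕ → CompBasis N → ℂ) (hψ : ∀ t, ψ t = fun f => w (f, unaryClock T t)) :
    (star w ⬝ᵥ Hcomp3 N m T hN hT U *ᵥ w).re =
      ∑ i ∈ Finset.univ.filter (fun i : Fin N => m ≤ (i : ℕ)), vnorm (qproj N i 1 *ᵥ ψ 0) ^ 2
      + vnorm (qproj N ⟨0, hN⟩ 0 *ᵥ ψ T) ^ 2
      + 1 / 2 * ∑ s : Fin T, vnorm (ψ (s + 1) - U s *ᵥ ψ s) ^ 2 := by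
  have hq : ∀ (i : Fin N) (a : Fin 2) (x : CompBasis N → ℂ),
      star x ⬝ᵥ qproj N i a *ᵥ x = ((vnorm (qproj N i a *ᵥ x) ^ 2 : ℝ) : ℂ) := by
    intro i a x
    rw [vnorm_sq]
    push_cast
    simp only [dotProduct, qproj, mulVec_diagonal, Pi.star_apply]
    refine Finset.sum_congr rfl fun f _ => ?_
    split_ifs <;> simp [Complex.normSq_eq_conj_mul_self]
  have hprop : ∀ s : Fin T, star w ⬝ᵥ Hprop3 N T U s *ᵥ w =
      ((1 / 2 * vnorm (ψ (s + 1) - U s *ᵥ ψ s) ^ 2 : ℝ) : ℂ) := by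
    intro s
    have hs := s.isLt
    rw [Hprop3, smul_mulVec, dotProduct_smul, sub_mulVec, sub_mulVec, add_mulVec,
      dotProduct_sub, dotProduct_sub, dotProduct_add,
      form_legal hw _ (Aterm T s) (a := s + 1) (b := s + 1) hs hs
        (fun t t' ht ht' => Aterm_legal s ht ht'),
      form_legal hw _ (Bterm T s) (a := s) (b := s) hs.le hs.le
        (fun t t' ht ht' => Bterm_legal s ht ht'),
      form_legal hw _ (cflip T s) (a := s + 1) (b := s) hs hs.le
        (fun t t' ht ht' => cflip_legal s ht ht'),
      form_legal hw _ (cflip T s)ᴴ (a := s) (b := s + 1) hs.le hs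
        (fun t t' ht ht' => by
          rw [conjTranspose_apply, cflip_legal s ht' ht]
          by_cases h1 : t = s <;> by_cases h2 : t' = s + 1 <;> simp [h1, h2]),
      one_mulVec, one_mulVec, ← hψ, ← hψ, vnorm_sub_unitary_sq (hU s)]
    push_cast
    simp
  have hin : star w ⬝ᵥ Hin3 N m T hT *ᵥ w =
      ((∑ i ∈ Finset.univ.filter (fun i : Fin N => m ≤ (i : ℕ)),
        vnorm (qproj N i 1 *ᵥ ψ 0) ^ 2 : ℝ) : ℂ) := by
    rw [Hin3, sum_mulVec, dotProduct_sum]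
    rw [Complex.ofReal_sum]
    refine Finset.sum_congr rfl fun i _ => ?_
    rw [form_legal hw _ _ (Nat.zero_le _) (Nat.zero_le _)
      (fun t t' ht ht' => cproj_zero_legal hT ht ht'), ← hψ, hq]
  have hout : star w ⬝ᵥ Hout3 N T hN hT *ᵥ w =
      ((vnorm (qproj N ⟨0, hN⟩ 0 *ᵥ ψ T) ^ 2 : ℝ) : ℂ) := by
    rw [Hout3, form_legal hw _ _ le_rfl le_rfl
      (fun t t' ht ht' => cproj_last_legal hT ht ht'), ← hψ, hq]
  rw [Hcomp3, add_mulVec, add_mulVec, dotProduct_add, dotProduct_add, sum_mulVec, dotProduct_sum,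
    hin, hout, Finset.sum_congr rfl fun s _ => hprop s, ← Complex.ofReal_sum,
    ← Complex.ofReal_add, ← Complex.ofReal_add, Complex.ofReal_re, Finset.mul_sum]

lemma vnorm_sq_legal {w : CompBasis N × ClockBasis T → ℂ}
    (hw : ∀ f g, Illegal g → w (f, g) = 0)
    (ψ : ℕ → CompBasis N → ℂ) (hψ : ∀ t, ψ t = fun f => w (f, unaryClock T t)) :
    vnorm w ^ 2 = ∑ t ∈ Finset.range (T + 1), vnorm (ψ t) ^ 2 := by
  rw [vnorm_sq, Fintype.sum_prod_type_right, sum_legal]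
  · refine Finset.sum_congr rfl fun t _ => ?_
    rw [vnorm_sq, hψ]
  · intro g hg
    exact Finset.sum_eq_zero fun f _ => by simp [hw f g hg]

end Legal

/-! ### Deviation from the true history -/

section Evolution

variable {n : Type*} [Fintype n] [DecidableEq n] {T : ℕ} {U : Fin T → Matrix n n ℂ}

lemma evolve_sub (x y : n → ℂ) (t : ℕ) :
    evolve T U (x - y) t = evolve T U x t - evolve T U y t := by
  induction t with
  | zero => rfl
  | succ t ih => simp only [evolve, ih, mulVec_sub]

lemma evolve_smul (c : ℂ) (x : n → ℂ) (t : ℕ) :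
    evolve T U (c • x) t = c • evolve T U x t := by
  induction t with
  | zero => rfl
  | succ t ih => simp only [evolve, ih, mulVec_smul]

lemma vnorm_step (hU : ∀ s, U s ∈ Matrix.unitaryGroup n ℂ) (t : ℕ) (x : n → ℂ) :
    vnorm ((if h : t < T then U ⟨t, h⟩ else 1) *ᵥ x) = vnorm x := by
  split_ifs with h
  · exact vnorm_unitary (hU _) x
  · rw [one_mulVec]

lemma vnorm_evolve (hU : ∀ s, U s ∈ Matrix.unitaryGroup n ℂ) (x : n → ℂ) (t : ℕ) :
    vnorm (evolve T U x t) = vnorm x := by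
  induction t with
  | zero => rfl
  | succ t ih => rw [evolve, vnorm_step hU, ih]

lemma vnorm_sub_evolve_le (hU : ∀ s, U s ∈ Matrix.unitaryGroup n ℂ) (ψ : ℕ → n → ℂ) (t : ℕ) :
    vnorm (ψ t - evolve T U (ψ 0) t) ≤
      ∑ s ∈ Finset.range t,
        vnorm (ψ (s + 1) - (if h : s < T then U ⟨s, h⟩ else 1) *ᵥ ψ s) := by
  induction t with
  | zero => simp [evolve, vnorm]
  | succ t ih =>
    rw [Finset.sum_range_succ]
    have h : ψ (t + 1) - evolve T U (ψ 0) (t + 1) =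
        (if h : t < T then U ⟨t, h⟩ else 1) *ᵥ (ψ t - evolve T U (ψ 0) t) +
          (ψ (t + 1) - (if h : t < T then U ⟨t, h⟩ else 1) *ᵥ ψ t) := by
      rw [evolve, mulVec_sub]
      abel
    rw [h]
    refine (vnorm_add_le _ _).trans ?_
    rw [vnorm_step hU]
    gcongr

/-- Cauchy–Schwarz over at most `T` steps: the squared deviation from the true history is at most
`T` times the total squared propagation error. -/
lemma vnorm_sub_evolve_sq_le (hU : ∀ s, U s ∈ Matrix.unitaryGroup n ℂ) (ψ : ℕ → n → ℂ) {t : ℕ}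
    (ht : t ≤ T) :
    vnorm (ψ t - evolve T U (ψ 0) t) ^ 2 ≤
      T * ∑ s : Fin T, vnorm (ψ (s + 1) - U s *ᵥ ψ s) ^ 2 := by
  set d : ℕ → ℝ := fun s =>
    vnorm (ψ (s + 1) - (if h : s < T then U ⟨s, h⟩ else 1) *ᵥ ψ s) with hd
  have hD : ∑ s : Fin T, vnorm (ψ (s + 1) - U s *ᵥ ψ s) ^ 2 = ∑ s ∈ Finset.range T, d s ^ 2 := by
    rw [Finset.sum_range]
    exact Finset.sum_congr rfl fun s _ => by simp [hd]
  have h0 : 0 ≤ ∑ s ∈ Finset.range t, d s ^ 2 := Finset.sum_nonneg fun s _ => sq_nonneg _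
  calc vnorm (ψ t - evolve T U (ψ 0) t) ^ 2 ≤ (∑ s ∈ Finset.range t, d s) ^ 2 :=
        pow_le_pow_left₀ (vnorm_nonneg _) (vnorm_sub_evolve_le hU ψ t) 2
    _ ≤ t * ∑ s ∈ Finset.range t, d s ^ 2 := by
        simpa using sq_sum_le_card_mul_sum_sq (s := Finset.range t) (f := d)
    _ ≤ T * ∑ s ∈ Finset.range T, d s ^ 2 := by
        gcongr
    _ = _ := by rw [hD]

end Evolution

/-! ### Acceptance probability and the energy of histories -/

section Circuit

variable {N m T : ℕ}

lemma inputVec_smul (hm : m ≤ N) (c : ℂ) (ξ : (Fin m → Fin 2) → ℂ) :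
    inputVec N m hm (c • ξ) = c • inputVec N m hm ξ := by
  funext f
  simp only [inputVec, Pi.smul_apply, smul_eq_mul, mul_ite, mul_zero]

lemma accProb_eq (hN : 0 < N) (hm : m ≤ N) (U : Fin T → Matrix (CompBasis N) (CompBasis N) ℂ)
    (ξ : (Fin m → Fin 2) → ℂ) :
    accProb N m T hN hm U ξ =
      vnorm (qproj N ⟨0, hN⟩ 1 *ᵥ evolve T U (inputVec N m hm ξ) T) ^ 2 := by
  rw [vnorm_sq, accProb]

lemma accProb_smul (hN : 0 < N) (hm : m ≤ N) (U : Fin T → Matrix (CompBasis N) (CompBasis N) ℂ)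
    (c : ℂ) (ξ : (Fin m → Fin 2) → ℂ) :
    accProb N m T hN hm U (c • ξ) = ‖c‖ ^ 2 * accProb N m T hN hm U ξ := by
  rw [accProb_eq, accProb_eq, inputVec_smul, evolve_smul, mulVec_smul, vnorm_smul, mul_pow]

/-- The soundness hypothesis, rescaled to proofs of arbitrary norm. -/
lemma accProb_le (hN : 0 < N) (hm : m ≤ N) {U : Fin T → Matrix (CompBasis N) (CompBasis N) ℂ}
    {ε : ℝ} (hacc : ∀ ξ : (Fin m → Fin 2) → ℂ, star ξ ⬝ᵥ ξ = 1 → accProb N m T hN hm U ξ < ε)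
    (ξ : (Fin m → Fin 2) → ℂ) : accProb N m T hN hm U ξ ≤ ε * vnorm ξ ^ 2 := by
  by_cases h : ξ = 0
  · have h0 := accProb_smul hN hm U 0 ξ
    have hv : vnorm ξ = 0 := by simp [h, vnorm]
    rw [zero_smul, norm_zero] at h0
    rw [hv, h, h0]
    simp
  · have hpos := vnorm_pos h
    set c : ℂ := (((vnorm ξ)⁻¹ : ℝ) : ℂ) with hc
    have hcn : ‖c‖ = (vnorm ξ)⁻¹ := by
      rw [hc, Complex.norm_real, Real.norm_of_nonneg (inv_nonneg.mpr hpos.le)]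
    have h1 : star (c • ξ) ⬝ᵥ (c • ξ) = 1 := by
      rw [star_dotProduct_self, vnorm_smul, hcn, inv_mul_cancel₀ hpos.ne']
      simp
    have h2 := hacc _ h1
    rw [accProb_smul, hcn, inv_pow, inv_mul_lt_iff₀ (by positivity)] at h2
    linarith

/-- Restriction of a computation vector to the all-zeros ancilla subspace, as a proof vector. -/
def restrictProof (N m : ℕ) (x : CompBasis N → ℂ) : (Fin m → Fin 2) → ℂ :=
  fun y => x fun i => if h : (i : ℕ) < m then y ⟨i, h⟩ else 0

lemma vnorm_le_inputVec (hm : m ≤ N) (ξ : (Fin m → Fin 2) → ℂ) :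
    vnorm ξ ^ 2 ≤ vnorm (inputVec N m hm ξ) ^ 2 := by
  rw [vnorm_sq, vnorm_sq]
  let e : (Fin m → Fin 2) → CompBasis N := fun y i => if h : (i : ℕ) < m then y ⟨i, h⟩ else 0
  have he : ∀ y, (fun j => e y (Fin.castLE hm j)) = y := fun y => by
    funext j
    simp [e]
  have hinj : Function.Injective e := fun y y' h => by rw [← he y, ← he y', h]
  have hval : ∀ y, inputVec N m hm ξ (e y) = ξ y := by
    intro y
    rw [inputVec, if_pos, he]
    intro i hi
    simp [e, not_lt.mpr hi]
  calc ∑ y, Complex.normSq (ξ y) = ∑ y, Complex.normSq (inputVec N m hm ξ (e y)) := by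
        simp only [hval]
    _ = ∑ f ∈ Finset.univ.map ⟨e, hinj⟩, Complex.normSq (inputVec N m hm ξ f) := by
        rw [Finset.sum_map]; rfl
    _ ≤ _ := Finset.sum_le_sum_of_subset_of_nonneg (Finset.subset_univ _)
        fun f _ _ => Complex.normSq_nonneg _

/-- `H_in` penalizes the component outside the all-zeros ancilla subspace by at least `1`. -/
lemma vnorm_sub_inputVec_sq_le (hm : m ≤ N) (x : CompBasis N → ℂ) :
    vnorm (x - inputVec N m hm (restrictProof N m x)) ^ 2 ≤
      ∑ i ∈ Finset.univ.filter (fun i : Fin N => m ≤ (i : ℕ)), vnorm (qproj N i 1 *ᵥ x) ^ 2 := by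
  simp only [vnorm_sq]
  rw [Finset.sum_comm]
  refine Finset.sum_le_sum fun f _ => ?_
  have hnn : ∀ i ∈ Finset.univ.filter (fun i : Fin N => m ≤ (i : ℕ)),
      0 ≤ Complex.normSq ((qproj N i 1 *ᵥ x) f) := fun i _ => Complex.normSq_nonneg _
  by_cases hf : ∀ i : Fin N, m ≤ (i : ℕ) → f i = 0
  · have : (fun i : Fin N => if h : (i : ℕ) < m then f (Fin.castLE hm ⟨i, h⟩) else 0) = f := by
      funext i
      split_ifs with h
      · rfl
      · exact (hf i (not_lt.mp h)).symm
    have h0 : (x - inputVec N m hm (restrictProof N m x)) f = 0 := by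
      rw [Pi.sub_apply, inputVec, if_pos hf, restrictProof, this, sub_self]
    rw [h0, map_zero]
    exact Finset.sum_nonneg hnn
  · have h0 : (x - inputVec N m hm (restrictProof N m x)) f = x f := by
      rw [Pi.sub_apply, inputVec, if_neg hf, sub_zero]
    push Not at hf
    obtain ⟨i, hi, hfi⟩ := hf
    have h1 : f i = 1 := by
      have := (f i).isLt
      omega
    have h2 : (qproj N i 1 *ᵥ x) f = x f := by
      simp [qproj, mulVec_diagonal, h1]
    rw [h0, ← h2]
    exact Finset.single_le_sum hnn (by simpa using hi)

lemma qproj_pythagoras (i : Fin N) (x : CompBasis N → ℂ) :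
    vnorm x ^ 2 = vnorm (qproj N i 0 *ᵥ x) ^ 2 + vnorm (qproj N i 1 *ᵥ x) ^ 2 := by
  simp only [vnorm_sq, ← Finset.sum_add_distrib]
  refine Finset.sum_congr rfl fun f _ => ?_
  simp only [qproj, mulVec_diagonal]
  have : f i = 0 ∨ f i = 1 := by
    have := (f i).isLt
    omega
  rcases this with h | h <;> simp [h]

lemma vnorm_qproj_le (i : Fin N) (a : Fin 2) (x : CompBasis N → ℂ) :
    vnorm (qproj N i a *ᵥ x) ≤ vnorm x := by
  refine le_of_sq_le_sq ?_ (vnorm_nonneg _)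
  have h := qproj_pythagoras i x
  have : a = 0 ∨ a = 1 := by
    have := a.isLt
    omega
  rcases this with rfl | rfl
  · nlinarith [sq_nonneg (vnorm (qproj N i 1 *ᵥ x))]
  · nlinarith [sq_nonneg (vnorm (qproj N i 0 *ᵥ x))]

/-- Every history has energy at least `1 / (114 T²)` times its squared norm. A history of small energy
would be close to the true history of a valid input, whose final state is rejected with probability
at least `3/4` and hence pays a large output penalty. -/
lemma history_energy (hN : 0 < N) (hm : m ≤ N) (hT : 0 < T)
    {U : Fin T → Matrix (CompBasis N) (CompBasis N) ℂ}
    (hU : ∀ s, U s ∈ Matrix.unitaryGroup (CompBasis N) ℂ) {ε : ℝ} (hε : ε ≤ 1 / 4)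
    (hacc : ∀ ξ : (Fin m → Fin 2) → ℂ, star ξ ⬝ᵥ ξ = 1 → accProb N m T hN hm U ξ < ε)
    (ψ : ℕ → CompBasis N → ℂ) :
    ∑ t ∈ Finset.range (T + 1), vnorm (ψ t) ^ 2 ≤ 114 * (T : ℝ) ^ 2 *
      (∑ i ∈ Finset.univ.filter (fun i : Fin N => m ≤ (i : ℕ)), vnorm (qproj N i 1 *ᵥ ψ 0) ^ 2
      + vnorm (qproj N ⟨0, hN⟩ 0 *ᵥ ψ T) ^ 2
      + 1 / 2 * ∑ s : Fin T, vnorm (ψ (s + 1) - U s *ᵥ ψ s) ^ 2) := by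
  set P := qproj N ⟨0, hN⟩ 0 with hP
  set ξ := restrictProof N m (ψ 0) with hξ
  set x := inputVec N m hm ξ with hx
  set Ein := ∑ i ∈ Finset.univ.filter (fun i : Fin N => m ≤ (i : ℕ)),
    vnorm (qproj N i 1 *ᵥ ψ 0) ^ 2 with hEin
  set D := ∑ s : Fin T, vnorm (ψ (s + 1) - U s *ᵥ ψ s) ^ 2 with hD
  set E := Ein + vnorm (P *ᵥ ψ T) ^ 2 + 1 / 2 * D with hE
  have hEin0 : 0 ≤ Ein := Finset.sum_nonneg fun i _ => sq_nonneg _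
  have hD0 : 0 ≤ D := Finset.sum_nonneg fun i _ => sq_nonneg _
  have hin : vnorm (ψ 0 - x) ^ 2 ≤ E := by
    have := vnorm_sub_inputVec_sq_le hm (ψ 0)
    nlinarith [sq_nonneg (vnorm (P *ᵥ ψ T))]
  have hout : vnorm (P *ᵥ ψ T) ^ 2 ≤ E := by linarith
  have hT1 : (1 : ℝ) ≤ T := by exact_mod_cast hT
  have hE0 : 0 ≤ E := (sq_nonneg _).trans hin
  have hdrift : ∀ t ≤ T, vnorm (ψ t - evolve T U (ψ 0) t) ^ 2 ≤ 2 * T * E := by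
    intro t ht
    refine (vnorm_sub_evolve_sq_le hU ψ ht).trans ?_
    have : D ≤ 2 * E := by nlinarith [sq_nonneg (vnorm (P *ᵥ ψ T))]
    nlinarith
  have hevx : ∀ t, vnorm (evolve T U (ψ 0) t - evolve T U x t) = vnorm (ψ 0 - x) := fun t => by
    rw [← evolve_sub, vnorm_evolve hU]
  have hsq3 : ∀ a b c : ℝ, (a + b + c) ^ 2 ≤ 3 * (a ^ 2 + b ^ 2 + c ^ 2) := fun a b c => by
    nlinarith [sq_nonneg (a - b), sq_nonneg (b - c), sq_nonneg (a - c)]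
  -- The valid input `x` is rejected with probability at least `3/4`.
  have hrej : 3 / 4 * vnorm x ^ 2 ≤ vnorm (P *ᵥ evolve T U x T) ^ 2 := by
    have h1 := accProb_le hN hm hacc ξ
    have h2 := qproj_pythagoras ⟨0, hN⟩ (evolve T U x T)
    have h3 := vnorm_le_inputVec hm ξ
    rw [accProb_eq] at h1
    rw [vnorm_evolve hU] at h2
    nlinarith [sq_nonneg (vnorm ξ)]
  have hxE : vnorm x ^ 2 ≤ 8 * (T + 1) * E := by
    have h1 : P *ᵥ evolve T U x T = P *ᵥ ψ T + (P *ᵥ (evolve T U (ψ 0) T - ψ T)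
        + P *ᵥ (evolve T U x T - evolve T U (ψ 0) T)) := by
      rw [← mulVec_add, ← mulVec_add]
      congr 1
      abel
    have h2 : vnorm (P *ᵥ evolve T U x T) ≤ vnorm (P *ᵥ ψ T)
        + vnorm (ψ T - evolve T U (ψ 0) T) + vnorm (ψ 0 - x) := by
      have ha := vnorm_add_le (P *ᵥ ψ T) (P *ᵥ (evolve T U (ψ 0) T - ψ T)
        + P *ᵥ (evolve T U x T - evolve T U (ψ 0) T))
      have hb := vnorm_add_le (P *ᵥ (evolve T U (ψ 0) T - ψ T))
        (P *ᵥ (evolve T U x T - evolve T U (ψ 0) T))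
      have hc := vnorm_qproj_le ⟨0, hN⟩ 0 (evolve T U (ψ 0) T - ψ T)
      have hd := vnorm_qproj_le ⟨0, hN⟩ 0 (evolve T U x T - evolve T U (ψ 0) T)
      rw [vnorm_sub_comm] at hc hd
      rw [hevx] at hd
      rw [h1]
      linarith
    have h3 := pow_le_pow_left₀ (vnorm_nonneg _) h2 2
    have h4 := hsq3 (vnorm (P *ᵥ ψ T)) (vnorm (ψ T - evolve T U (ψ 0) T)) (vnorm (ψ 0 - x))
    have h5 := hdrift T le_rfl
    linarith
  have hslice : ∀ t ∈ Finset.range (T + 1), vnorm (ψ t) ^ 2 ≤ 57 * T * E := by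
    intro t ht
    rw [Finset.mem_range] at ht
    have h1 : ψ t = (ψ t - evolve T U (ψ 0) t)
        + ((evolve T U (ψ 0) t - evolve T U x t) + evolve T U x t) := by abel
    have h2 : vnorm (ψ t) ≤ vnorm (ψ t - evolve T U (ψ 0) t) + vnorm (ψ 0 - x) + vnorm x := by
      have ha := vnorm_add_le (ψ t - evolve T U (ψ 0) t)
        ((evolve T U (ψ 0) t - evolve T U x t) + evolve T U x t)
      have hb := vnorm_add_le (evolve T U (ψ 0) t - evolve T U x t) (evolve T U x t)
      rw [← h1] at ha
      rw [hevx, vnorm_evolve hU] at hb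
      linarith
    have h3 := pow_le_pow_left₀ (vnorm_nonneg _) h2 2
    have h4 := hsq3 (vnorm (ψ t - evolve T U (ψ 0) t)) (vnorm (ψ 0 - x)) (vnorm x)
    have h5 := hdrift t (by omega)
    nlinarith [mul_nonneg (sub_nonneg.mpr hT1) hE0]
  refine (Finset.sum_le_card_nsmul _ _ _ hslice).trans ?_
  rw [Finset.card_range, nsmul_eq_mul]
  push_cast
  nlinarith [mul_nonneg (mul_nonneg (sub_nonneg.mpr hT1) (zero_le_one.trans hT1)) hE0]

end Circuit

/-! ### Combining the estimates -/

/-- **Soundness, 3-local.** There exist constants `c > 0` and `T₀` such that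
for all `N`, `m ≤ N`, `T ≥ max(T₀, N)`, all unitaries `U_1, …, U_T` on `ℂ^{2^N}` and all
`0 < ε ≤ 1/4`: if the circuit accepts every unit proof `ξ` with probability less than `ε`,
then every eigenvalue of the 3-local Hamiltonian `H = H_in + H_out + H_prop + H_clock` is
larger than `c/T³`. -/
theorem threeLocal_soundness :
    ∃ c : ℝ, 0 < c ∧ ∃ T₀ : ℕ,
      ∀ (N m T : ℕ) (hN : 0 < N) (hm : m ≤ N) (hT : max T₀ N ≤ T),
        ∀ U : Fin T → Matrix (CompBasis N) (CompBasis N) ℂ,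
          (∀ s, U s ∈ Matrix.unitaryGroup (CompBasis N) ℂ) →
          ∀ ε : ℝ, 0 < ε → ε ≤ 1 / 4 →
            (∀ ξ : (Fin m → Fin 2) → ℂ, star ξ ⬝ᵥ ξ = 1 →
              accProb N m T hN hm U ξ < ε) →
            ∀ μ : ℝ,
              (∃ v : CompBasis N × ClockBasis T → ℂ, v ≠ 0 ∧
                (Hcomp3 N m T hN (by omega) U + Hclock3 N T) *ᵥ v = (μ : ℂ) • v) →
              c / (T : ℝ) ^ 3 < μ := by
  refine ⟨1 / 2, by norm_num, 228, ?_⟩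
  intro N m T hN hm hT U hU ε _ hε hacc μ ⟨v, hv0, hv⟩
  have hT228 : 228 ≤ T := (le_max_left _ _).trans hT
  have hNT : N ≤ T := (le_max_right _ _).trans hT
  have hTpos : 0 < T := by omega
  classical
  -- `v = w + r`, with `w` supported on legal and `r` on illegal clock states.
  set w : CompBasis N × ClockBasis T → ℂ := fun p => if Illegal p.2 then 0 else v p with hw
  set r : CompBasis N × ClockBasis T → ℂ := fun p => if Illegal p.2 then v p else 0 with hr
  have hvwr : v = w + r := by
    funext p
    by_cases h : Illegal p.2 <;> simp only [hw, hr, Pi.add_apply, h, if_true, if_false] <;> simp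
  have hwL : ∀ f g, Illegal g → w (f, g) = 0 := fun f g hg => if_pos hg
  have hnorm : vnorm v ^ 2 = vnorm w ^ 2 + vnorm r ^ 2 := by
    simp only [vnorm_sq, ← Finset.sum_add_distrib]
    refine Finset.sum_congr rfl fun p _ => ?_
    by_cases h : Illegal p.2 <;> simp only [hw, hr, h, if_true, if_false] <;> simp
  set A := Hcomp3 N m T hN hTpos U with hA
  have hen : (star v ⬝ᵥ A *ᵥ v).re + (star v ⬝ᵥ Hclock3 N T *ᵥ v).re = μ * vnorm v ^ 2 := by
    have h := congrArg (fun y => (star v ⬝ᵥ y).re) hv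
    simp only [add_mulVec, dotProduct_add, dotProduct_smul, star_dotProduct_self, smul_eq_mul,
      Complex.add_re] at h
    rw [← Complex.ofReal_mul, Complex.ofReal_re] at h
    exact h
  have hclock : (T : ℝ) ^ 12 * vnorm r ^ 2 ≤ (star v ⬝ᵥ Hclock3 N T *ᵥ v).re := by
    rw [form_Hclock3, vnorm_sq]
    gcongr with p
    by_cases h : Illegal p.2
    · have h1 := one_le_inversions h
      have h2 := Complex.normSq_nonneg (v p)
      simp only [hr, h, if_true]
      nlinarith
    · simp only [hr, h, if_false, map_zero]
      exact mul_nonneg (inversions_nonneg _) (Complex.normSq_nonneg _)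
  have hcross := form_add_ge A (norm_Hcomp3_le (m := m) hN hTpos hNT hU) w r
  rw [← hvwr] at hcross
  have hleg := history_energy hN hm hTpos hU hε hacc (fun t f => w (f, unaryClock T t))
  rw [← form_Hcomp3_legal (m := m) hN hTpos hU hwL _ (fun _ => rfl),
    ← vnorm_sq_legal hwL _ (fun _ => rfl), ← hA] at hleg
  have hvpos : 0 < vnorm v ^ 2 := pow_pos (vnorm_pos hv0) 2
  set a := vnorm w with ha
  set b := vnorm r with hb
  set q := (star w ⬝ᵥ A *ᵥ w).re with hq
  have hT' : (228 : ℝ) ≤ T := by exact_mod_cast hT228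
  set τ : ℝ := (T : ℝ) with hτ
  have hτ0 : 0 < τ := by linarith
  have hτ3 : 0 < τ ^ 3 := by positivity
  -- `2 / T³ ≤ 1 / (114 T²)` because `T ≥ 228`.
  have h1 : 2 * a ^ 2 ≤ τ ^ 3 * q := by
    have hq0 : 0 ≤ q := by
      by_contra hneg
      nlinarith [sq_nonneg a, mul_pos (pow_pos hτ0 2) (neg_pos.mpr (not_le.mp hneg))]
    nlinarith [mul_nonneg (mul_nonneg (sub_nonneg.mpr hT') (sq_nonneg τ)) hq0]
  -- `8 T a b ≤ a² / T³ + 16 T⁵ b²`, multiplied through by `T³`.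
  have h2 : τ ^ 3 * (2 * (4 * τ) * a * b) ≤ a ^ 2 + 16 * τ ^ 8 * b ^ 2 := by
    nlinarith [sq_nonneg (a - 4 * τ ^ 4 * b)]
  have h3 : 1 + 16 * τ ^ 8 + 4 * τ ^ 4 ≤ τ ^ 15 := by
    have e1 : (1 : ℝ) ≤ τ ^ 8 := one_le_pow₀ (by linarith)
    have e2 : τ ^ 4 ≤ τ ^ 8 := pow_le_pow_right₀ (by linarith) (by norm_num)
    have e3 : τ ≤ τ ^ 7 := le_self_pow₀ (by linarith) (by norm_num)
    have e4 : τ ^ 15 = τ ^ 8 * τ ^ 7 := by ring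
    nlinarith
  have h4 : a ^ 2 + b ^ 2 ≤ τ ^ 3 * (μ * (a ^ 2 + b ^ 2)) := by
    rw [← hnorm, ← hen, hnorm]
    have h5 : τ ^ 3 * (q - 2 * (4 * τ) * a * b - 4 * τ * b ^ 2 + τ ^ 12 * b ^ 2) ≤
        τ ^ 3 * ((star v ⬝ᵥ A *ᵥ v).re + (star v ⬝ᵥ Hclock3 N T *ᵥ v).re) := by
      refine mul_le_mul_of_nonneg_left ?_ hτ3.le
      linarith
    nlinarith [mul_le_mul_of_nonneg_right h3 (sq_nonneg b)]
  rw [hnorm] at hvpos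
  have h6 : 1 ≤ τ ^ 3 * μ := by
    by_contra hlt
    nlinarith [mul_pos (sub_pos.mpr (not_le.mp hlt)) hvpos]
  rw [div_lt_iff₀ hτ3]
  linarith
end

section
/- Let T ≥ 2 and consider the Hermitian matrix S = Σ_{1 ≤ i < j ≤ T} |01⟩⟨01|_{ij} on (ℂ²)^{⊗T}, where |01⟩⟨01|_{ij} projects onto clock qubit i being 0 and clock qubit j being 1. Then for every unit vector η in the span of the computational basis states of (ℂ²)^{⊗T} that are not of the form |t̂⟩ for some 0 ≤ t ≤ T, one has ⟨η, Sη⟩ ≥ 1. Equivalently, S ⪰ Π_illegal, where Π_illegal is the orthogonal projection onto that span. -/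
/-!
`S` is diagonal in the computational basis, with entry at `g` the number of pairs `i < j` having
`g i = 0` and `g j = 1` (`Sclock_eq_diagonal`). A string without such an inversion
equals `1^t 0^{T-t}`, with `t` the number of ones before its first zero
(`eq_unaryClock_of_no_inversion`), so this entry is at least `1` on every illegal basis state.
Since `η` is supported on those,
`⟨η, S η⟩ = ∑ g, (inversions of g) |η g|² ≥ ∑ g, |η g|² = 1`.
-/

open Matrix

/-- The pairs `i < j` with `g i = 0` and `g j = 1`. -/
def clockInversions (T : ℕ) (g : ClockBasis T) : Finset (Fin T × Fin T) :=
  Finset.univ.filter fun p => p.1 < p.2 ∧ g p.1 = 0 ∧ g p.2 = 1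

lemma Sclock_eq_diagonal (T : ℕ) :
    Sclock T = Matrix.diagonal fun g => ((clockInversions T g).card : ℂ) := by
  ext g h
  by_cases hgh : g = h
  · subst hgh
    simp only [Sclock, Matrix.sum_apply, Matrix.diagonal_apply_eq, clockInversions,
      Finset.card_filter, Nat.cast_sum, Fintype.sum_prod_type]
    refine Finset.sum_congr rfl fun i _ => Finset.sum_congr rfl fun j _ => ?_
    by_cases hij : i < j <;> simp [hij, cproj2]
  · simp only [Sclock, Matrix.sum_apply, Matrix.diagonal_apply_ne _ hgh]
    refine Finset.sum_eq_zero fun i _ => Finset.sum_eq_zero fun j _ => ?_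
    by_cases hij : i < j <;> simp [hij, cproj2, hgh]

lemma eq_unaryClock_of_no_inversion (T : ℕ) (g : ClockBasis T)
    (hg : ∀ i j : Fin T, i < j → g i = 0 → g j ≠ 1) :
    ∃ t ≤ T, g = unaryClock T t := by
  have bit : ∀ i, g i = 0 ∨ g i = 1 := fun i => by
    have := (g i).isLt
    simp only [Fin.ext_iff, Fin.val_zero, Fin.val_one]
    omega
  by_cases h : ∃ n, ∃ hn : n < T, g ⟨n, hn⟩ = 0
  · classical
    -- `t` is the (zero-based) index of the first zero.
    obtain ⟨hn, h0⟩ := Nat.find_spec h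
    refine ⟨Nat.find h, hn.le, funext fun i => ?_⟩
    unfold unaryClock
    split_ifs with hi
    · exact (bit i).resolve_left fun hz => Nat.find_min h hi ⟨i.isLt, hz⟩
    · rcases (not_lt.mp hi).eq_or_lt with he | hlt
      · have : i = ⟨Nat.find h, hn⟩ := Fin.ext he.symm
        rw [this, h0]
      · exact (bit i).resolve_right (hg ⟨Nat.find h, hn⟩ i hlt h0)
  · refine ⟨T, le_rfl, funext fun i => ?_⟩
    simp only [unaryClock, i.isLt, if_true]
    exact (bit i).resolve_left fun hz => h ⟨i, i.isLt, hz⟩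

/-- For every unit vector `η` in the span of the illegal (non-unary)
computational basis states of the clock space, `⟨η, S η⟩ ≥ 1`, where
`S = Σ_{1 ≤ i < j ≤ T} |01⟩⟨01|_{ij}`. -/
theorem Sclock_quadForm_ge_one_on_illegal (T : ℕ) (hT : 2 ≤ T)
    (η : ClockBasis T → ℂ) (hunit : star η ⬝ᵥ η = 1)
    (hillegal : ∀ t : ℕ, t ≤ T → η (unaryClock T t) = 0) :
    1 ≤ (star η ⬝ᵥ (Sclock T *ᵥ η)).re := by
  have hterm : ∀ (c : ℕ) (z : ℂ), (star z * ((c : ℂ) * z)).re = c * Complex.normSq z := by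
    intro c z
    simp [Complex.normSq_apply]
    ring
  have hnorm : ∑ g, Complex.normSq (η g) = 1 := by
    have h := congrArg Complex.re hunit
    simp only [dotProduct, Complex.re_sum, Pi.star_apply, Complex.one_re] at h
    rw [← h]
    refine Finset.sum_congr rfl fun g _ => ?_
    simpa using (hterm 1 (η g)).symm
  rw [Sclock_eq_diagonal, ← hnorm]
  simp only [dotProduct, Complex.re_sum, Pi.star_apply, Matrix.mulVec_diagonal, hterm]
  refine Finset.sum_le_sum fun g _ => ?_
  by_cases hg : (clockInversions T g).card = 0
  · obtain ⟨t, ht, rfl⟩ := eq_unaryClock_of_no_inversion T g fun i j hij hi hj => by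
      have hmem : (i, j) ∈ clockInversions T g := by simp [clockInversions, hij, hi, hj]
      rw [Finset.card_eq_zero] at hg
      simp [hg] at hmem
    simp [hillegal t ht]
  · exact le_mul_of_one_le_left (Complex.normSq_nonneg _)
      (by exact_mod_cast Nat.one_le_iff_ne_zero.mpr hg)
end

section
/- Suppose 1 ≤ N ≤ T and T ≥ 5. Let η = α₁η₁ + α₂η₂ be a unit vector in ℂ^{2^N} ⊗ (ℂ²)^{⊗T}, where η₁ is a unit vector in the legal subspace H_legal (the span of vectors whose clock part is a unary state |t̂⟩), η₂ is a unit vector in the orthogonal complement of H_legal, α₁, α₂ ∈ [0,1], α₁² + α₂² = 1, and α₂ ≥ 1/T⁵. Then ⟨η, Hη⟩ ≥ α₂² T^{12} − 4T ≥ T² − 4T > 1, where H = H_comp + H_clock. -/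
/-!
The energy splits into a clock penalty and a computational part bounded below by `-T`.

* `H_in` and `H_out` are positive semidefinite.
* For `X = U_t ⊗ |1⟩⟨0|_t` one has `X†X = I ⊗ |0⟩⟨0|_t`, hence
  `2 - X - X† = (1 - X)†(1 - X) + I ⊗ |1⟩⟨1|_t ≥ 0`, so that `H_prop,t ≥ -1` (`hprop_add_one`) and
  `H_comp ≥ -T`.
* A clock string without any pair `i < j` of values `0, 1` is unary (`exists_unary`), so
  `Σ_{i<j} |01⟩⟨01|_{ij}` dominates the projector onto illegal clock strings (`sclock_sub`), and
  `H_clock ≥ T¹² (I ⊗ P_illegal)`.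

Evaluated on `η = α₁ η₁ + α₂ η₂`, the projector `I ⊗ P_illegal` gives exactly `α₂²`, so
`⟨η, H η⟩ ≥ α₂² T¹² - T`, which is stronger than the claimed `α₂² T¹² - 4T`.
-/

open Matrix
open scoped Kronecker

open scoped ComplexOrder

lemma posSemidef_diagonal_ite {n : Type*} [Fintype n] [DecidableEq n] (p : n → Prop)
    [DecidablePred p] : (Matrix.diagonal fun f => if p f then (1 : ℂ) else 0).PosSemidef := by
  apply Matrix.PosSemidef.diagonal
  intro f
  dsimp only
  split_ifs <;> simp

lemma aterm_psd (T : ℕ) (s : Fin T) : (Aterm T s).PosSemidef := by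
  unfold Aterm
  split_ifs
  · exact posSemidef_diagonal_ite _
  · exact posSemidef_diagonal_ite _

lemma bterm_psd (T : ℕ) (s : Fin T) : (Bterm T s).PosSemidef := by
  unfold Bterm
  split_ifs
  · exact posSemidef_diagonal_ite _
  · exact posSemidef_diagonal_ite _

/-- `|0⟩⟨1|_s |1⟩⟨0|_s = |0⟩⟨0|_s`. -/
lemma cflip_conjTranspose_mul (T : ℕ) (s : Fin T) :
    (cflip T s)ᴴ * cflip T s = cproj T s 0 := by
  ext g g'
  simp only [Matrix.mul_apply, Matrix.conjTranspose_apply, cflip, cproj, Matrix.diagonal_apply]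
  -- The only intermediate string that contributes is `g` with its `s`-th bit set to `1`.
  rw [Finset.sum_eq_single (Function.update g s 1)]
  · by_cases h0 : g s = 0
    · by_cases hg : g = g'
      · subst hg
        simp +contextual [h0, Function.update_of_ne]
      · have : ¬ (g' s = 0 ∧ ∀ r, r ≠ s → Function.update g s 1 r = g' r) := by
          rintro ⟨h1, h2⟩
          apply hg
          funext r
          by_cases hr : r = s
          · rw [hr, h0, h1]
          · rw [← h2 r hr, Function.update_of_ne hr]
        simp [hg, this]
    · simp [h0]
  · intro b _ hb
    have : ¬ (b s = 1 ∧ g s = 0 ∧ ∀ r, r ≠ s → b r = g r) := by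
      rintro ⟨h1, _, h3⟩
      apply hb
      funext r
      by_cases hr : r = s
      · rw [hr, h1, Function.update_self]
      · rw [h3 r hr, Function.update_of_ne hr]
    simp [this]
  · simp

lemma cproj_zero_add_one (T : ℕ) (s : Fin T) : cproj T s 0 + cproj T s 1 = 1 := by
  rw [cproj, cproj, Matrix.diagonal_add, ← Matrix.diagonal_one]
  congr 1
  funext g
  have h : g s = 0 ∨ g s = 1 := by lia
  rcases h with h | h <;> simp [h]

/-- The propagation terms satisfy `H_prop,t ≥ -1`. -/
lemma hprop_add_one (N T : ℕ) (U : Fin T → Matrix (CompBasis N) (CompBasis N) ℂ)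
    (hU : ∀ s, U s ∈ Matrix.unitaryGroup (CompBasis N) ℂ) (s : Fin T) :
    (Hprop3 N T U s + 1).PosSemidef := by
  have hX : (U s ⊗ₖ cflip T s)ᴴ * (U s ⊗ₖ cflip T s)
      = (1 : Matrix (CompBasis N) (CompBasis N) ℂ) ⊗ₖ cproj T s 0 := by
    have hu : (U s)ᴴ * U s = 1 := Matrix.mem_unitaryGroup_iff'.mp (hU s)
    rw [Matrix.conjTranspose_kronecker, ← Matrix.mul_kronecker_mul, hu, cflip_conjTranspose_mul]
  have h1 : (1 : Matrix (CompBasis N × ClockBasis T) (CompBasis N × ClockBasis T) ℂ)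
      = (1 : Matrix (CompBasis N) (CompBasis N) ℂ) ⊗ₖ cproj T s 0
        + (1 : Matrix (CompBasis N) (CompBasis N) ℂ) ⊗ₖ cproj T s 1 := by
    rw [← Matrix.kronecker_add, cproj_zero_add_one, Matrix.one_kronecker_one]
  have key : Hprop3 N T U s + 1 = (1 / 2 : ℂ) •
      ((1 : Matrix (CompBasis N) (CompBasis N) ℂ) ⊗ₖ Aterm T s
      + (1 : Matrix (CompBasis N) (CompBasis N) ℂ) ⊗ₖ Bterm T s
      + ((1 - U s ⊗ₖ cflip T s)ᴴ * (1 - U s ⊗ₖ cflip T s)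
      + (1 : Matrix (CompBasis N) (CompBasis N) ℂ) ⊗ₖ cproj T s 1)) := by
    have e : (1 - U s ⊗ₖ cflip T s)ᴴ * (1 - U s ⊗ₖ cflip T s)
        + (1 : Matrix (CompBasis N) (CompBasis N) ℂ) ⊗ₖ cproj T s 1
        = 1 + 1 - U s ⊗ₖ cflip T s - (U s)ᴴ ⊗ₖ (cflip T s)ᴴ := by
      rw [Matrix.conjTranspose_sub, Matrix.conjTranspose_one, sub_mul, mul_sub, mul_sub, hX,
        one_mul, one_mul, mul_one, Matrix.conjTranspose_kronecker]
      nth_rewrite 3 [h1]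
      abel
    rw [e, Hprop3]
    module
  rw [key]
  have hI : (1 : Matrix (CompBasis N) (CompBasis N) ℂ).PosSemidef := Matrix.PosSemidef.one
  refine Matrix.PosSemidef.smul ?_ (by simp)
  exact ((hI.kronecker (aterm_psd T s)).add (hI.kronecker (bterm_psd T s))).add
    ((Matrix.posSemidef_conjTranspose_mul_self _).add
      (hI.kronecker (posSemidef_diagonal_ite _)))

/-- A clock string in which no `0` precedes a `1` is a unary clock state. -/
lemma exists_unary (T : ℕ) (g : ClockBasis T) (h : ∀ i j, i < j → ¬ (g i = 0 ∧ g j = 1)) :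
    ∃ t ≤ T, g = unaryClock T t := by
  by_cases hz : ∃ k, ∃ hk : k < T, g ⟨k, hk⟩ = 0
  · classical
    obtain ⟨hk, hg⟩ := Nat.find_spec hz
    refine ⟨Nat.find hz, hk.le, ?_⟩
    funext i
    unfold unaryClock
    split_ifs with hi
    · have := Nat.find_min hz hi
      push Not at this
      have := this i.2
      simp only [Fin.eta] at this
      lia
    · rcases (not_lt.mp hi).eq_or_lt with he | hl
      · rw [← hg]
        congr 1
        exact Fin.ext he.symm
      · have := h ⟨_, hk⟩ i hl
        simp only [hg, true_and] at this
        lia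
  · push Not at hz
    refine ⟨T, le_rfl, ?_⟩
    funext i
    have := hz i i.2
    simp only [Fin.eta] at this
    simp only [unaryClock, i.2, if_true]
    lia

open scoped Classical in
/-- The projector onto the clock basis states that are not unary. -/
noncomputable def illegalProj (T : ℕ) : Matrix (ClockBasis T) (ClockBasis T) ℂ :=
  Matrix.diagonal fun g => if ∀ t ≤ T, g ≠ unaryClock T t then 1 else 0

/-- Each non-unary clock string contains a misordered pair, hence is penalised at least once. -/
lemma sclock_sub (T : ℕ) : (Sclock T - illegalProj T).PosSemidef := by
  classical
  have hS : Sclock T = Matrix.diagonal fun g => ∑ i : Fin T, ∑ j : Fin T,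
      if i < j ∧ g i = 0 ∧ g j = 1 then (1 : ℂ) else 0 := by
    ext g g'
    simp only [Sclock, Matrix.sum_apply, Matrix.diagonal_apply]
    by_cases hg : g = g'
    · subst hg
      simp only [if_true]
      refine Finset.sum_congr rfl fun i _ => Finset.sum_congr rfl fun j _ => ?_
      by_cases hij : i < j <;> simp [hij, cproj2]
    · simp only [hg, if_false]
      refine Finset.sum_eq_zero fun i _ => Finset.sum_eq_zero fun j _ => ?_
      by_cases hij : i < j <;> simp [hij, cproj2, hg]
  rw [hS, illegalProj, Matrix.diagonal_sub]
  apply Matrix.PosSemidef.diagonal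
  intro g
  have nn : ∀ i j : Fin T, (0 : ℂ) ≤ if i < j ∧ g i = 0 ∧ g j = 1 then (1 : ℂ) else 0 := by
    intro i j
    split_ifs <;> simp
  simp only [Pi.zero_apply, sub_nonneg]
  split_ifs with hg
  · have : ∃ i j, i < j ∧ g i = 0 ∧ g j = 1 := by
      by_contra! hc
      obtain ⟨t, ht, e⟩ := exists_unary T g (fun i j hij hh => hc i j hij hh.1 hh.2)
      exact hg t ht e
    obtain ⟨i, j, hij⟩ := this
    calc (1 : ℂ) = if i < j ∧ g i = 0 ∧ g j = 1 then (1 : ℂ) else 0 := by rw [if_pos hij]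
      _ ≤ ∑ j : Fin T, if i < j ∧ g i = 0 ∧ g j = 1 then (1 : ℂ) else 0 :=
        Finset.single_le_sum (f := fun j => if i < j ∧ g i = 0 ∧ g j = 1 then (1 : ℂ) else 0)
          (fun j _ => nn i j) (Finset.mem_univ j)
      _ ≤ _ := Finset.single_le_sum
          (f := fun i => ∑ j : Fin T, if i < j ∧ g i = 0 ∧ g j = 1 then (1 : ℂ) else 0)
          (fun i _ => Finset.sum_nonneg fun j _ => nn i j) (Finset.mem_univ i)
  · exact Finset.sum_nonneg fun i _ => Finset.sum_nonneg fun j _ => nn i j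

/-- The operator inequality `H ≥ T¹² (I ⊗ P_illegal) - T`. -/
lemma hamiltonian_lower_bound (N m T : ℕ) (hN : 0 < N) (hT : 0 < T)
    (U : Fin T → Matrix (CompBasis N) (CompBasis N) ℂ)
    (hU : ∀ s, U s ∈ Matrix.unitaryGroup (CompBasis N) ℂ) :
    (Hcomp3 N m T hN hT U + Hclock3 N T + (T : ℂ) • 1
      - ((T : ℂ) ^ 12) • ((1 : Matrix (CompBasis N) (CompBasis N) ℂ) ⊗ₖ illegalProj T)
      ).PosSemidef := by
  have key : Hcomp3 N m T hN hT U + Hclock3 N T + (T : ℂ) • 1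
      - ((T : ℂ) ^ 12) • ((1 : Matrix (CompBasis N) (CompBasis N) ℂ) ⊗ₖ illegalProj T)
      = Hin3 N m T hT + Hout3 N T hN hT + ∑ s : Fin T, (Hprop3 N T U s + 1)
      + ((T : ℂ) ^ 12) • ((1 : Matrix (CompBasis N) (CompBasis N) ℂ)
        ⊗ₖ (Sclock T - illegalProj T)) := by
    have hk : (1 : Matrix (CompBasis N) (CompBasis N) ℂ) ⊗ₖ (Sclock T - illegalProj T)
        = (1 : Matrix (CompBasis N) (CompBasis N) ℂ) ⊗ₖ Sclock T
          - (1 : Matrix (CompBasis N) (CompBasis N) ℂ) ⊗ₖ illegalProj T := by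
      ext a b
      simp [Matrix.kroneckerMap_apply, mul_sub]
    rw [hk, Finset.sum_add_distrib, Finset.sum_const, Finset.card_univ, Fintype.card_fin,
      Hcomp3, Hclock3, ← Nat.cast_smul_eq_nsmul ℂ]
    module
  rw [key]
  refine ((Matrix.PosSemidef.add ?_ ?_).add ?_).add ?_
  · exact Matrix.posSemidef_sum _ fun i _ =>
      (posSemidef_diagonal_ite _).kronecker (posSemidef_diagonal_ite _)
  · exact (posSemidef_diagonal_ite _).kronecker (posSemidef_diagonal_ite _)
  · exact Matrix.posSemidef_sum _ fun s _ => hprop_add_one N T U hU s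
  · refine (Matrix.PosSemidef.one.kronecker (sclock_sub T)).smul ?_
    exact pow_nonneg (Nat.cast_nonneg T) 12

/-- Suppose `1 ≤ N ≤ T` and `T ≥ 5`.  If `η = α₁ η₁ + α₂ η₂` is a unit
vector with `η₁` a unit vector in the legal subspace `H_legal`, `η₂` a unit vector in its
orthogonal complement, `α₁, α₂ ∈ [0,1]`, `α₁² + α₂² = 1` and `α₂ ≥ 1/T⁵`, then
`⟨η, H η⟩ ≥ α₂² T¹² − 4T ≥ T² − 4T > 1`, where `H = H_comp + H_clock`. -/
theorem illegal_weight_penalty (N m T : ℕ) (hN : 0 < N) (hm : m ≤ N) (hNT : N ≤ T)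
    (hT : 5 ≤ T)
    (U : Fin T → Matrix (CompBasis N) (CompBasis N) ℂ)
    (hU : ∀ s, U s ∈ Matrix.unitaryGroup (CompBasis N) ℂ)
    (η η₁ η₂ : CompBasis N × ClockBasis T → ℂ) (α₁ α₂ : ℝ)
    (hu1 : star η₁ ⬝ᵥ η₁ = 1) (hu2 : star η₂ ⬝ᵥ η₂ = 1)
    (hlegal : ∀ (x : CompBasis N) (g : ClockBasis T),
      (∀ t : ℕ, t ≤ T → g ≠ unaryClock T t) → η₁ (x, g) = 0)
    (horth : ∀ (x : CompBasis N) (t : ℕ), t ≤ T → η₂ (x, unaryClock T t) = 0)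
    (hα₁ : α₁ ∈ Set.Icc (0 : ℝ) 1) (hα₂ : α₂ ∈ Set.Icc (0 : ℝ) 1)
    (hαsum : α₁ ^ 2 + α₂ ^ 2 = 1)
    (hα₂big : 1 / (T : ℝ) ^ 5 ≤ α₂)
    (hη : η = (α₁ : ℂ) • η₁ + (α₂ : ℂ) • η₂) :
    α₂ ^ 2 * (T : ℝ) ^ 12 - 4 * T ≤
        (star η ⬝ᵥ ((Hcomp3 N m T hN (by omega) U + Hclock3 N T) *ᵥ η)).re ∧
      (T : ℝ) ^ 2 - 4 * T ≤ α₂ ^ 2 * (T : ℝ) ^ 12 - 4 * T ∧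
      1 < (T : ℝ) ^ 2 - 4 * T := by
  have hT5 : (5 : ℝ) ≤ T := by exact_mod_cast hT
  have hTpos : (0 : ℝ) < T := by linarith
  refine ⟨?_, ?_, by nlinarith⟩
  · have h12 : star η₁ ⬝ᵥ η₂ = 0 := by
      refine Finset.sum_eq_zero fun p _ => ?_
      obtain ⟨x, g⟩ := p
      by_cases hg : ∀ t ≤ T, g ≠ unaryClock T t
      · simp [hlegal x g hg]
      · push Not at hg
        obtain ⟨t, ht, rfl⟩ := hg
        simp [horth x t ht]
    have h21 : star η₂ ⬝ᵥ η₁ = 0 := by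
      rw [Matrix.star_dotProduct, h12, star_zero]
    have hP : ((1 : Matrix (CompBasis N) (CompBasis N) ℂ) ⊗ₖ illegalProj T) *ᵥ η
        = (α₂ : ℂ) • η₂ := by
      classical
      rw [illegalProj, ← Matrix.diagonal_one, Matrix.diagonal_kronecker_diagonal]
      funext p
      obtain ⟨x, g⟩ := p
      rw [Matrix.mulVec_diagonal]
      by_cases hg : ∀ t ≤ T, g ≠ unaryClock T t
      · simp only [if_pos hg]
        simp [hη, hlegal x g hg]
      · simp only [if_neg hg]
        push Not at hg
        obtain ⟨t, ht, rfl⟩ := hg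
        simp [horth x t ht]
    have hs : star η = (α₁ : ℂ) • star η₁ + (α₂ : ℂ) • star η₂ := by
      rw [hη, star_add, star_smul, star_smul]
      simp
    have hPη : star η ⬝ᵥ ((α₂ : ℂ) • η₂) = ((α₂ ^ 2 : ℝ) : ℂ) := by
      rw [hs]
      simp only [add_dotProduct, smul_dotProduct, dotProduct_smul, h12, hu2, smul_eq_mul]
      push_cast
      ring
    have hnorm : star η ⬝ᵥ η = 1 := by
      have : ((α₁ ^ 2 + α₂ ^ 2 : ℝ) : ℂ) = 1 := by rw [hαsum]; simp
      rw [← this, hs, hη]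
      simp only [add_dotProduct, dotProduct_add, smul_dotProduct, dotProduct_smul, h12, h21, hu1,
        hu2, smul_eq_mul]
      push_cast
      ring
    have h := (hamiltonian_lower_bound N m T hN (by omega) U hU).dotProduct_mulVec_nonneg η
    rw [Matrix.sub_mulVec, Matrix.add_mulVec, Matrix.smul_mulVec, Matrix.smul_mulVec, hP,
      Matrix.one_mulVec, dotProduct_sub, dotProduct_add, dotProduct_smul, dotProduct_smul, hPη,
      hnorm] at h
    have h' := (Complex.le_def.mp h).1
    have e : ((T : ℂ) ^ 12 * ((α₂ ^ 2 : ℝ) : ℂ)).re = (T : ℝ) ^ 12 * α₂ ^ 2 := by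
      rw [← Complex.ofReal_natCast, ← Complex.ofReal_pow, ← Complex.ofReal_mul, Complex.ofReal_re]
    simp only [smul_eq_mul, Complex.sub_re, Complex.add_re, e, mul_one, Complex.natCast_re,
      Complex.zero_re] at h'
    linarith
  · have h1 : 1 ≤ α₂ * (T : ℝ) ^ 5 := (div_le_iff₀ (by positivity)).mp hα₂big
    have h2 : 1 ≤ (α₂ * (T : ℝ) ^ 5) ^ 2 := one_le_pow₀ h1
    have h3 : (T : ℝ) ^ 2 * 1 ≤ (T : ℝ) ^ 2 * (α₂ * (T : ℝ) ^ 5) ^ 2 := by gcongr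
    nlinarith [h3]
end
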